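/- Assume G ∈ C²(Ω × Y × ℝ) satisfies (Reg), (Mono), (Twist), (Gen_Ω) and (Gen_∂X), that X ⊆ Ω is compact, that ρ is a continuous probability density supported in X, and that int(X) ∩ {ρ > 0} is path-connected. Let ψ ∈ ℝ^N satisfy Hᵢ(ψ) > 0 for every i ∈ {1,…,N}. Then the graph 𝒢_ψ with vertex set {1,…,N} and edge set E = {(i,j) : ∂Hᵢ/∂ψ_j(ψ) > 0} is connected. -/

import Mathlib

set_option autoImplicit false

open MeasureTheory Set

noncomputable section

variable {d N : ℕ}

/-- Generalized Laguerre cell associated to `ψ` and index `i`. -/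
def Lag (Ω : Set (EuclideanSpace ℝ (Fin d))) (G : EuclideanSpace ℝ (Fin d) → Fin N → ℝ → ℝ)
    (ψ : Fin N → ℝ) (i : Fin N) : Set (EuclideanSpace ℝ (Fin d)) :=
  {x ∈ Ω | ∀ j, G x j (ψ j) ≤ G x i (ψ i)}

/-- Interface `Γᵢⱼ(ψ)` between two cells. -/
def Gam (Ω : Set (EuclideanSpace ℝ (Fin d))) (G : EuclideanSpace ℝ (Fin d) → Fin N → ℝ → ℝ)
    (ψ : Fin N → ℝ) (i j : Fin N) : Set (EuclideanSpace ℝ (Fin d)) :=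
  {x ∈ Ω | G x i (ψ i) = G x j (ψ j)}

/-- The mass function `H(ψ) = (μ(Lagᵢ(ψ)))ᵢ` where `μ` has density `ρ`. -/
def Hfun (Ω : Set (EuclideanSpace ℝ (Fin d))) (G : EuclideanSpace ℝ (Fin d) → Fin N → ℝ → ℝ)
    (ρ : EuclideanSpace ℝ (Fin d) → ℝ) (ψ : Fin N → ℝ) : Fin N → ℝ :=
  fun i => ((volume.withDensity fun x => ENNReal.ofReal (ρ x)) (Lag Ω G ψ i)).toReal

/-!
If the graph were disconnected, there would be a set `S` of indices, neither empty nor full, with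
`∂Hᵢ/∂ψⱼ(ψ) ≤ 0` for all `i ∈ S`, `j ∉ S`, so the mass of the cells of `S` would not grow to first
order when `ψ` is raised by `ε` outside `S`. It does grow: the union of these cells is a sublevel
set `{g ≤ 0}` of a Lipschitz function `g`, and `g` has a null zero set by the twist condition. Since
every cell has mass and `{ρ > 0}` is open and connected, some point of it is a limit both of points
with `g < 0` and of points with `g > 0`. By the coarea-type estimate along segments joining such
points, the strips `{0 < g ≤ c ε}` near it have mass at least `κ ε`, and by strict monotonicity
in `v` such a strip joins the cells of `S` when `ψ` is raised.

This argument needs `H` to be differentiable at `ψ`. Locally one integrates along the lines of a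
direction transverse to all active interfaces. Almost every such line avoids the points where
three cells meet, which are `ℋ^{d-1}`-null. On it the endpoints of the cell are differentiable
in `ψ` by the implicit function theorem, with a Lipschitz bound uniform over the lines that lets
one differentiate under the integral.
-/

open Filter Topology
open scoped NNReal symmDiff

/-! ### Differentiability of the mass of a moving set, locally in space -/

section MovingSet

variable {E : Type*} [TopologicalSpace E]

theorem exists_fin_sum_eq_of_forall_mem_nhds [T2Space E] [LocallyCompactSpace E] {ρ : E → ℝ}
    (hρ : Continuous ρ) (hρc : HasCompactSupport ρ) {U : E → Set E}
    (hU : ∀ x ∈ tsupport ρ, U x ∈ 𝓝 x) :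
    ∃ (n : ℕ) (r : Fin n → E → ℝ), (∀ x, ρ x = ∑ i, r i x) ∧ ∀ i, Continuous (r i) ∧
      HasCompactSupport (r i) ∧ ∃ x ∈ tsupport ρ, tsupport (r i) ⊆ U x := by
  have hK : IsCompact (tsupport ρ) := hρc
  obtain ⟨t, ht, hcover⟩ := hK.elim_nhds_subcover (fun x => interior (U x))
    fun x hx => interior_mem_nhds.2 (hU x hx)
  let center := t.equivFin.symm
  obtain ⟨f, hfU, hf_sum, -, -⟩ := exists_continuous_sum_one_of_isOpen_isCompact
    (s := fun i => interior (U (center i))) (fun _ => isOpen_interior) hK <| by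
      intro x hx
      obtain ⟨z, hz, hxz⟩ := mem_iUnion₂.1 (hcover hx)
      exact mem_iUnion.2 ⟨center.symm ⟨z, hz⟩, by simpa using hxz⟩
  refine ⟨t.card, fun i x => f i x * ρ x, fun x => ?_, fun i => ⟨(f i).continuous.mul hρ,
    hρc.mul_left, center i, ht _ (center i).2,
    tsupport_mul_subset_left.trans ((hfU i).trans interior_subset)⟩⟩
  rw [← Finset.sum_mul]
  by_cases hx : x ∈ tsupport ρ
  · have hsum := hf_sum hx
    simp only [Finset.sum_apply, Pi.one_apply] at hsum
    rw [hsum, one_mul]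
  · rw [image_eq_zero_of_notMem_tsupport hx, mul_zero]

variable [MeasurableSpace E] {P : Type*} [NormedAddCommGroup P] [NormedSpace ℝ P]
  {μ : Measure E} {L M : P → Set E} {p₀ : P} {x₀ : E}

/-- The mass that a continuous density supported near `x₀` gives to the moving set `L p` is
differentiable in the parameter `p` at `p₀`. Testing against all such densities makes the notion
depend only on the germ of `{(p, x) | x ∈ L p}` at `(p₀, x₀)`. -/
def DifferentiableMassNear (μ : Measure E) (L : P → Set E) (p₀ : P) (x₀ : E) : Prop :=
  ∃ U ∈ 𝓝 x₀, ∀ r : E → ℝ, Continuous r → HasCompactSupport r → tsupport r ⊆ U →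
    DifferentiableAt ℝ (fun p => ∫ x, (L p).indicator r x ∂μ) p₀

theorem differentiableMassNear_const (A : Set E) :
    DifferentiableMassNear μ (fun _ : P => A) p₀ x₀ :=
  ⟨univ, univ_mem, fun _ _ _ _ => differentiableAt_const _⟩

theorem DifferentiableMassNear.congr (hM : DifferentiableMassNear μ M p₀ x₀)
    (h : ∀ᶠ q : P × E in 𝓝 (p₀, x₀), q.2 ∈ L q.1 ↔ q.2 ∈ M q.1) :
    DifferentiableMassNear μ L p₀ x₀ := by
  obtain ⟨U, hU, hMU⟩ := hM
  rw [nhds_prod_eq, eventually_prod_iff] at h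
  obtain ⟨near_p₀, hp₀, near_x₀, hx₀, hLM⟩ := h
  refine ⟨U ∩ {x | near_x₀ x}, inter_mem hU hx₀, fun r hr hrc hrU => ?_⟩
  refine (hMU r hr hrc (hrU.trans inter_subset_left)).congr_of_eventuallyEq ?_
  filter_upwards [hp₀] with p hp
  refine integral_congr_ae (Eventually.of_forall fun x => ?_)
  by_cases hx : x ∈ tsupport r
  · exact indicator_eq_indicator (hLM hp (hrU hx).2) rfl
  · simp only [indicator, image_eq_zero_of_notMem_tsupport hx, ite_self]

theorem differentiableAt_integral_indicator_of_near [T2Space E] [LocallyCompactSpace E]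
    [BorelSpace E] [IsFiniteMeasureOnCompacts μ] (hL : ∀ p, MeasurableSet (L p))
    {ρ : E → ℝ} (hρ : Continuous ρ) (hρc : HasCompactSupport ρ)
    (h : ∀ x ∈ tsupport ρ, DifferentiableMassNear μ L p₀ x) :
    DifferentiableAt ℝ (fun p => ∫ x, (L p).indicator ρ x ∂μ) p₀ := by
  choose! U hU hdiff using h
  obtain ⟨n, r, hρr, hr⟩ := exists_fin_sum_eq_of_forall_mem_nhds hρ hρc hU
  have hsum (p : P) : ∫ x, (L p).indicator ρ x ∂μ = ∑ i, ∫ x, (L p).indicator (r i) x ∂μ := by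
    rw [← integral_finsetSum _ fun i _ =>
      ((hr i).1.integrable_of_hasCompactSupport (hr i).2.1).indicator (hL p)]
    refine integral_congr_ae (Eventually.of_forall fun x => ?_)
    by_cases hx : x ∈ L p
    · simpa only [indicator_of_mem hx] using hρr x
    · simp only [indicator_of_notMem hx, Finset.sum_const_zero]
  simp_rw [hsum]
  refine DifferentiableAt.fun_sum fun i _ => ?_
  obtain ⟨hcont, hcomp, x, hx, hrU⟩ := hr i
  exact hdiff x hx _ hcont hcomp hrU

end MovingSet

/-! ### Constraints of first order on the line -/

theorem nonneg_iff_of_abs_sub_le_half {a b : ℝ} (h : |a - b| ≤ |b| / 2) : 0 ≤ a ↔ 0 ≤ b := by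
  rw [abs_le] at h
  rcases abs_cases b with hb | hb <;> constructor <;> intro _ <;> linarith

theorem exists_nhds_abs_sub_sub_le_half {W : Type*} [NormedAddCommGroup W] [NormedSpace ℝ W]
    {f : W → ℝ} {f' : W →L[ℝ] ℝ} {q₀ v : W} (hf : HasStrictFDerivAt f f' q₀) (hv : f' v ≠ 0) :
    ∃ t ∈ 𝓝 q₀, ∀ q ∈ t, ∀ s : ℝ, q + s • v ∈ t →
      |f (q + s • v) - f q - s * f' v| ≤ |s * f' v| / 2 := by
  have hv0 : 0 < ‖v‖ := norm_pos_iff.2 fun h => hv (by rw [h, map_zero])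
  have hlittle : ∀ᶠ q : W × W in 𝓝 q₀ ×ˢ 𝓝 q₀,
      ‖f q.1 - f q.2 - f' (q.1 - q.2)‖ ≤ |f' v| / 2 / ‖v‖ * ‖q.1 - q.2‖ := by
    rw [← nhds_prod_eq]
    exact hf.isLittleO.def (by positivity)
  obtain ⟨t, ht, htt⟩ := mem_prod_self_iff.1 hlittle
  refine ⟨t, ht, fun q hq s hqs => ?_⟩
  have h := htt (mk_mem_prod hqs hq)
  simp only [mem_ofPred_eq, add_sub_cancel_left, map_smul, smul_eq_mul, norm_smul,
    Real.norm_eq_abs] at h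
  calc |f (q + s • v) - f q - s * f' v| ≤ |f' v| / 2 / ‖v‖ * (|s| * ‖v‖) := h
    _ = |s * f' v| / 2 := by rw [abs_mul]; field_simp

section Line

variable {P : Type*} [NormedAddCommGroup P] [NormedSpace ℝ P] {p₀ : P} {s₀ : ℝ}

theorem differentiableAt_setIntegral_Iic {r : ℝ → ℝ} (hr : Continuous r) (hri : Integrable r)
    {τ : P → ℝ} (hτ : DifferentiableAt ℝ τ p₀) :
    DifferentiableAt ℝ (fun p => ∫ s in Iic (τ p), r s) p₀ := by
  have hprimitive : DifferentiableAt ℝ (fun u => ∫ s in (0 : ℝ)..u, r s) (τ p₀) :=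
    (hr.integral_hasStrictDerivAt 0 (τ p₀)).hasDerivAt.differentiableAt
  refine ((hprimitive.comp p₀ hτ).const_add (∫ s in Iic 0, r s)).congr_of_eventuallyEq
    (Eventually.of_forall fun p => ?_)
  simp only [Function.comp_apply,
    ← intervalIntegral.integral_Iic_sub_Iic hri.integrableOn hri.integrableOn, add_sub_cancel]

theorem differentiableMassNear_Iic {τ : P → ℝ} (hτ : DifferentiableAt ℝ τ p₀) :
    DifferentiableMassNear volume (fun p => Iic (τ p)) p₀ s₀ := by
  refine ⟨univ, univ_mem, fun r hr hrc _ => ?_⟩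
  simp_rw [integral_indicator measurableSet_Iic]
  exact differentiableAt_setIntegral_Iic hr (hr.integrable_of_hasCompactSupport hrc) hτ

theorem differentiableMassNear_Ici {τ : P → ℝ} (hτ : DifferentiableAt ℝ τ p₀) :
    DifferentiableMassNear volume (fun p => Ici (τ p)) p₀ s₀ := by
  refine ⟨univ, univ_mem, fun r hr hrc _ => ?_⟩
  have hri := hr.integrable_of_hasCompactSupport (μ := volume) hrc
  refine ((differentiableAt_setIntegral_Iic hr hri hτ).const_sub (∫ s, r s)).congr_of_eventuallyEq
    (Eventually.of_forall fun p => ?_)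
  simp only [integral_indicator measurableSet_Ici, integral_Ici_eq_integral_Ioi,
    ← intervalIntegral.integral_Iic_add_Ioi (b := τ p) hri.integrableOn hri.integrableOn,
    add_sub_cancel_left]

theorem exists_differentiableAt_nonneg_iff [CompleteSpace P] {f : P × ℝ → ℝ} {f' : P × ℝ →L[ℝ] ℝ}
    (hf : HasStrictFDerivAt f f' (p₀, s₀)) (hf₀ : f (p₀, s₀) = 0) (hf' : f' (0, 1) ≠ 0) :
    ∃ τ : P → ℝ, DifferentiableAt ℝ τ p₀ ∧
      ∀ᶠ q : P × ℝ in 𝓝 (p₀, s₀), 0 ≤ f q ↔ 0 ≤ (q.2 - τ q.1) * f' (0, 1) := by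
  have hinv : (f' ∘L .inr ℝ P ℝ).IsInvertible :=
    ⟨ContinuousLinearEquiv.unitsEquivAut ℝ (Units.mk0 _ hf'), by ext; simp⟩
  let τ := hf.implicitFunctionOfProdDomain hinv
  have hτ : DifferentiableAt ℝ τ p₀ :=
    (hf.hasStrictFDerivAt_implicitFunctionOfProdDomain hinv).hasFDerivAt.differentiableAt
  have hτ_tendsto : Tendsto τ (𝓝 p₀) (𝓝 s₀) := hf.tendsto_implicitFunctionOfProdDomain hinv
  have hfτ : ∀ᶠ p in 𝓝 p₀, f (p, τ p) = 0 :=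
    hf₀ ▸ hf.eventually_apply_implicitFunctionOfProdDomain hinv
  obtain ⟨t, ht, hslope⟩ := exists_nhds_abs_sub_sub_le_half hf hf'
  have hfst : Tendsto Prod.fst (𝓝 (p₀, s₀)) (𝓝 p₀) := continuousAt_fst
  refine ⟨τ, hτ, ?_⟩
  filter_upwards [ht, hfst.eventually hfτ,
    (hfst.prodMk_nhds (hτ_tendsto.comp hfst)).eventually ht] with ⟨p, s⟩ hq hzero hqτ
  have hline : ((p, τ p) : P × ℝ) + (s - τ p) • ((0, 1) : P × ℝ) = (p, s) := by simp
  have h := hslope (p, τ p) hqτ (s - τ p) (by rwa [hline])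
  rw [hline, hzero, sub_zero] at h
  exact nonneg_iff_of_abs_sub_le_half h

theorem differentiableMassNear_nonneg [CompleteSpace P] {f : P × ℝ → ℝ} {f' : P × ℝ →L[ℝ] ℝ}
    (hf : HasStrictFDerivAt f f' (p₀, s₀)) (hf₀ : f (p₀, s₀) = 0) (hf' : f' (0, 1) ≠ 0) :
    DifferentiableMassNear volume (fun p => {s | 0 ≤ f (p, s)}) p₀ s₀ := by
  obtain ⟨τ, hτ, hfτ⟩ := exists_differentiableAt_nonneg_iff hf hf₀ hf'
  rcases hf'.lt_or_gt with hneg | hpos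
  · refine (differentiableMassNear_Iic hτ).congr (hfτ.mono fun q hq => ?_)
    rw [mem_ofPred_eq, hq, ← neg_mul_neg, mul_nonneg_iff_of_pos_right (neg_pos.2 hneg), neg_sub,
      sub_nonneg, mem_Iic]
  · refine (differentiableMassNear_Ici hτ).congr (hfτ.mono fun q hq => ?_)
    rw [mem_ofPred_eq, hq, mul_nonneg_iff_of_pos_right hpos, sub_nonneg, mem_Ici]

theorem differentiableMassNear_forall_nonneg [CompleteSpace P] {ι : Type*} [Finite ι]
    {f : ι → P × ℝ → ℝ} {f' : ι → P × ℝ →L[ℝ] ℝ}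
    (hf : ∀ k, HasStrictFDerivAt (f k) (f' k) (p₀, s₀))
    (hunique : ∀ k l, f k (p₀, s₀) = 0 → f l (p₀, s₀) = 0 → k = l)
    (hf' : ∀ k, f k (p₀, s₀) = 0 → f' k (0, 1) ≠ 0) :
    DifferentiableMassNear volume (fun p => {s | ∀ k, 0 ≤ f k (p, s)}) p₀ s₀ := by
  have hcont (k : ι) : ContinuousAt (f k) (p₀, s₀) := (hf k).continuousAt
  by_cases hneg : ∃ k, f k (p₀, s₀) < 0
  · obtain ⟨k, hk⟩ := hneg
    refine (differentiableMassNear_const ∅).congr ?_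
    filter_upwards [(hcont k).eventually (gt_mem_nhds hk)] with q hq
    simpa using ⟨k, hq⟩
  push Not at hneg
  have hpos : ∀ᶠ q in 𝓝 (p₀, s₀), ∀ l, f l (p₀, s₀) ≠ 0 → 0 < f l q :=
    eventually_all.2 fun l => eventually_imp_distrib_left.2 fun hl =>
      (hcont l).eventually (lt_mem_nhds ((hneg l).lt_of_ne' hl))
  by_cases hzero : ∃ k, f k (p₀, s₀) = 0
  · obtain ⟨k, hk⟩ := hzero
    refine (differentiableMassNear_nonneg (hf k) hk (hf' k hk)).congr ?_
    filter_upwards [hpos] with q hq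
    refine ⟨fun h => h k, fun h l => ?_⟩
    by_cases hl : l = k
    · exact hl ▸ h
    · exact (hq l fun h0 => hl (hunique l k h0 hk)).le
  · push Not at hzero
    refine (differentiableMassNear_const univ).congr ?_
    filter_upwards [hpos] with q hq
    simpa using fun l => (hq l (hzero l)).le

end Line

/-! ### Averaging along the lines of a fixed direction -/

section LineAverage

variable {E : Type*} [NormedAddCommGroup E] [NormedSpace ℝ E]

/-- The integral of `g` over the line `x + ℝ e`, parametrised by `s ↦ x + s • e` and weighted
by `w`. -/
def lineAverage (w : ℝ → ℝ) (e : E) (g : E → ℝ) (x : E) : ℝ :=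
  ∫ s, w s * g (x + s • e)

variable {w : ℝ → ℝ} {e : E} {ρ : E → ℝ}

theorem mul_indicator_comp_line (w : ℝ → ℝ) (e : E) (ρ : E → ℝ) (A : Set E) (x : E) :
    (fun s : ℝ => w s * A.indicator ρ (x + s • e)) =
      {s : ℝ | x + s • e ∈ A}.indicator fun s => w s * ρ (x + s • e) := by
  ext s
  simp only [indicator, mul_ite, mul_zero, mem_ofPred_eq]

theorem tsupport_mul_comp_line_subset (w : ℝ → ℝ) (e : E) (ρ : E → ℝ) (x : E) :
    tsupport (fun s : ℝ => w s * ρ (x + s • e)) ⊆ {s | x + s • e ∈ tsupport ρ} :=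
  closure_minimal (fun _ hs => subset_tsupport _ (right_ne_zero_of_mul hs))
    ((isClosed_tsupport ρ).preimage (by fun_prop : Continuous fun s : ℝ => x + s • e))

theorem exists_isCompact_forall_notMem_lineAverage_eq_zero (hw : HasCompactSupport w)
    (hρ : HasCompactSupport ρ) (e : E) :
    ∃ K : Set E, IsCompact K ∧ ∀ A : Set E, ∀ x ∉ K, lineAverage w e (A.indicator ρ) x = 0 := by
  refine ⟨(fun q : ℝ × E => q.2 - q.1 • e) '' (tsupport w ×ˢ tsupport ρ),
    (hw.isCompact.prod hρ.isCompact).image (by fun_prop), fun A x hx => ?_⟩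
  refine integral_eq_zero_of_ae (Eventually.of_forall fun s => ?_)
  by_contra hne
  have hρs : ρ (x + s • e) ≠ 0 := fun h =>
    right_ne_zero_of_mul hne (indicator_apply_eq_zero.2 fun _ => h)
  exact hx ⟨(s, x + s • e), ⟨subset_tsupport _ (left_ne_zero_of_mul hne),
    subset_tsupport _ hρs⟩, add_sub_cancel_right _ _⟩

theorem norm_lineAverage_indicator_sub_le [MeasurableSpace E] [BorelSpace E]
    (hw : Continuous w) (hwc : HasCompactSupport w) (hρ : Continuous ρ) {Mw Mρ : ℝ}
    (hMw : ∀ s, ‖w s‖ ≤ Mw) (hMρ : ∀ x, ‖ρ x‖ ≤ Mρ) {A B : Set E} (hA : MeasurableSet A)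
    (hB : MeasurableSet B) {x : E} {δ : ℝ≥0}
    (hδ : volume {s : ℝ | x + s • e ∈ tsupport ρ ∩ A ∆ B} ≤ δ) :
    ‖lineAverage w e (A.indicator ρ) x - lineAverage w e (B.indicator ρ) x‖ ≤ Mw * Mρ * δ := by
  have hline : Continuous fun s : ℝ => x + s • e := by fun_prop
  have hintegrable {S : Set E} (hS : MeasurableSet S) :
      Integrable fun s => w s * S.indicator ρ (x + s • e) := by
    have hwρ : Integrable fun s => w s * ρ (x + s • e) :=
      (hw.mul (hρ.comp hline)).integrable_of_hasCompactSupport hwc.mul_right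
    rw [mul_indicator_comp_line]
    exact hwρ.indicator (hline.measurable hS)
  rw [lineAverage, lineAverage, ← integral_sub (hintegrable hA) (hintegrable hB)]
  simp_rw [← mul_sub]
  rw [← setIntegral_eq_integral_of_forall_compl_eq_zero
    (s := {s : ℝ | x + s • e ∈ tsupport ρ ∩ A ∆ B})]
  · have hMw0 : 0 ≤ Mw := (norm_nonneg _).trans (hMw 0)
    have hMρ0 : 0 ≤ Mρ := (norm_nonneg _).trans (hMρ 0)
    refine (norm_setIntegral_le_of_norm_le_const
      (hδ.trans_lt ENNReal.coe_lt_top) fun s _ => ?_).trans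
      (mul_le_mul_of_nonneg_left (ENNReal.toReal_le_coe_of_le_coe hδ) (mul_nonneg hMw0 hMρ0))
    have hdiff : ‖A.indicator ρ (x + s • e) - B.indicator ρ (x + s • e)‖ ≤ Mρ := by
      by_cases h1 : x + s • e ∈ A <;> by_cases h2 : x + s • e ∈ B <;>
        simp [h1, h2, hMρ, hMρ0, -Real.norm_eq_abs]
    exact (norm_mul _ _).trans_le (mul_le_mul (hMw s) hdiff (norm_nonneg _) hMw0)
  · intro s hs
    have heq : A.indicator ρ (x + s • e) = B.indicator ρ (x + s • e) := by
      by_cases hsupp : x + s • e ∈ tsupport ρ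
      · exact indicator_eq_indicator
          (not_xor _ _ |>.1 fun h => hs ⟨hsupp, h⟩) rfl
      · simp only [indicator, image_eq_zero_of_notMem_tsupport hsupp, ite_self]
    rw [heq, sub_self, mul_zero]

theorem differentiableAt_lineAverage_indicator [MeasurableSpace E] [BorelSpace E]
    {P : Type*} [NormedAddCommGroup P] [NormedSpace ℝ P]
    {L : P → Set E} {p₀ : P} (hL : ∀ p, MeasurableSet (L p)) (hw : Continuous w)
    (hwc : HasCompactSupport w) (hρ : Continuous ρ) {x : E}
    (h : ∀ s : ℝ, x + s • e ∈ tsupport ρ →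
      DifferentiableMassNear volume (fun p => {s : ℝ | x + s • e ∈ L p}) p₀ s) :
    DifferentiableAt ℝ (fun p => lineAverage w e ((L p).indicator ρ) x) p₀ := by
  have hline : Continuous fun s : ℝ => x + s • e := by fun_prop
  simp_rw [lineAverage, mul_indicator_comp_line]
  exact differentiableAt_integral_indicator_of_near (fun p => hline.measurable (hL p))
    (hw.mul (hρ.comp hline)) hwc.mul_right
    fun s hs => h s (tsupport_mul_comp_line_subset w e ρ x hs)

variable [FiniteDimensional ℝ E]
  [MeasurableSpace E] [BorelSpace E] {μ : Measure E} [μ.IsAddHaarMeasure]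

theorem measurePreserving_shear (e : E) :
    MeasurePreserving (fun q : ℝ × E => (q.1, q.2 + q.1 • e))
      ((volume : Measure ℝ).prod μ) ((volume : Measure ℝ).prod μ) :=
  (MeasurePreserving.id volume).skew_product (g := fun (s : ℝ) (x : E) => x + s • e)
    (by fun_prop) (Eventually.of_forall fun s => map_add_right_eq_self μ (s • e))

theorem lintegral_volume_line (e : E) {J : Set ℝ} (hJ : MeasurableSet J) {A : Set E}
    (hA : MeasurableSet A) :
    ∫⁻ x, volume {s ∈ J | x + s • e ∈ A} ∂μ = volume J * μ A := by
  have hmp := measurePreserving_shear (μ := μ) e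
  rw [← Measure.prod_prod, ← hmp.measure_preimage (hJ.prod hA).nullMeasurableSet,
    Measure.prod_apply_symm (hmp.measurable (hJ.prod hA))]
  rfl

variable {g : E → ℝ}

theorem integrable_mul_comp_shear (hw : Integrable w) (hg : Integrable g μ) (e : E) :
    Integrable (fun q : ℝ × E => w q.1 * g (q.2 + q.1 • e)) (volume.prod μ) :=
  (measurePreserving_shear e).integrable_comp_of_integrable (hw.mul_prod hg)

theorem integrable_lineAverage (hw : Integrable w) (hg : Integrable g μ) (e : E) :
    Integrable (lineAverage w e g) μ :=
  (integrable_mul_comp_shear hw hg e).integral_prod_right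

theorem integral_lineAverage (hw : Integrable w) (hg : Integrable g μ) (e : E) :
    ∫ x, lineAverage w e g x ∂μ = (∫ s, w s) * ∫ x, g x ∂μ := by
  have hmp := measurePreserving_shear (μ := μ) e
  calc ∫ x, lineAverage w e g x ∂μ
      = ∫ q : ℝ × E, w q.1 * g (q.2 + q.1 • e) ∂(volume.prod μ) :=
        (integral_prod_symm _ (integrable_mul_comp_shear hw hg e)).symm
    _ = ∫ q : ℝ × E, w q.1 * g q.2 ∂(volume.prod μ) := by
        conv_rhs => rw [← hmp.map_eq]
        exact (integral_map hmp.aemeasurable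
          (hmp.map_eq.symm ▸ (hw.mul_prod hg).aestronglyMeasurable)).symm
    _ = (∫ s, w s) * ∫ x, g x ∂μ := integral_prod_mul w g

end LineAverage

theorem aestronglyMeasurable_fderiv_of_ae_differentiableAt {α : Type*} [MeasurableSpace α]
    {ν : Measure α} {P : Type*} [NormedAddCommGroup P] [NormedSpace ℝ P] [FiniteDimensional ℝ P]
    {g : P → α → ℝ} {p₀ : P} (hg : ∀ p, AEStronglyMeasurable (g p) ν)
    (hdiff : ∀ᵐ a ∂ν, DifferentiableAt ℝ (fun p => g p a) p₀) :
    AEStronglyMeasurable (fun a => fderiv ℝ (fun p => g p a) p₀) ν := by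
  have happly (v : P) : AEStronglyMeasurable (fun a => fderiv ℝ (fun p => g p a) p₀ v) ν := by
    refine aestronglyMeasurable_of_tendsto_ae atTop
      (f := fun (n : ℕ) a => (n : ℝ) • (g (p₀ + (n : ℝ)⁻¹ • v) a - g p₀ a))
      (fun n => ((hg _).sub (hg _)).const_smul (n : ℝ)) ?_
    filter_upwards [hdiff] with a ha
    exact (ha.hasFDerivAt.lim_real v).comp tendsto_natCast_atTop_atTop
  let b := Module.finBasis ℝ P
  have hexpand (φ : P →L[ℝ] ℝ) : φ = ∑ i, φ (b i) • (b.coord i).toContinuousLinearMap := by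
    refine ContinuousLinearMap.coe_injective (b.ext fun i => ?_)
    simp [Finsupp.single_apply]
  rw [funext fun a => hexpand (fderiv ℝ (fun p => g p a) p₀)]
  exact Finset.aestronglyMeasurable_fun_sum _ fun i _ => (happly (b i)).smul_const _

-- Averaging along lines trades the moving set in `E` for its one-dimensional sections.
theorem differentiableAt_integral_indicator_of_lines {E : Type*} [NormedAddCommGroup E]
    [NormedSpace ℝ E] [FiniteDimensional ℝ E] [MeasurableSpace E] [BorelSpace E]
    (μ : Measure E) [μ.IsAddHaarMeasure]
    {P : Type*} [NormedAddCommGroup P] [NormedSpace ℝ P] [FiniteDimensional ℝ P]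
    {L : P → Set E} {p₀ : P} (hL : ∀ p, MeasurableSet (L p))
    {ρ : E → ℝ} (hρ : Continuous ρ) (hρc : HasCompactSupport ρ) (e : E) {C : ℝ≥0}
    (hlip : ∀ᶠ p in 𝓝 p₀, ∀ x, volume {s : ℝ | x + s • e ∈ tsupport ρ ∩ L p ∆ L p₀} ≤
      C * ‖p - p₀‖ₑ)
    (hline : ∀ᵐ x ∂μ, ∀ s : ℝ, x + s • e ∈ tsupport ρ →
      DifferentiableMassNear volume (fun p => {s : ℝ | x + s • e ∈ L p}) p₀ s) :
    DifferentiableAt ℝ (fun p => ∫ x, (L p).indicator ρ x ∂μ) p₀ := by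
  let bump : ContDiffBump (0 : ℝ) := ⟨1, 2, one_pos, one_lt_two⟩
  let w : ℝ → ℝ := bump.normed volume
  have hw : Continuous w := bump.continuous_normed
  have hwc : HasCompactSupport w := bump.hasCompactSupport_normed
  have hwi : Integrable w := bump.integrable_normed
  obtain ⟨Mw, hMw⟩ := hwc.exists_bound_of_continuous hw
  obtain ⟨Mρ, hMρ⟩ := hρc.exists_bound_of_continuous hρ
  obtain ⟨K, hK, hzero⟩ := exists_isCompact_forall_notMem_lineAverage_eq_zero hwc hρc e
  let g (p : P) (x : E) : ℝ := lineAverage w e ((L p).indicator ρ) x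
  have hρi (p : P) : Integrable ((L p).indicator ρ) μ :=
    (hρ.integrable_of_hasCompactSupport hρc).indicator (hL p)
  have hgi (p : P) : Integrable (g p) μ := integrable_lineAverage hwi (hρi p) e
  have hgm (p : P) : AEStronglyMeasurable (g p) μ := (hgi p).aestronglyMeasurable
  have haverage (p : P) : ∫ x, (L p).indicator ρ x ∂μ = ∫ x, g p x ∂μ := by
    rw [integral_lineAverage hwi (hρi p) e, bump.integral_normed, one_mul]
  have hgdiff : ∀ᵐ x ∂μ, DifferentiableAt ℝ (fun p => g p x) p₀ := by
    filter_upwards [hline] with x hx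
    exact differentiableAt_lineAverage_indicator hL hw hwc hρ hx
  have hbound : Integrable (K.indicator fun _ => Mw * Mρ * C) μ :=
    (integrable_indicator_iff hK.measurableSet).2 (integrableOn_const hK.measure_lt_top.ne)
  simp_rw [haverage]
  refine (hasFDerivAt_integral_of_dominated_loc_of_lip' (𝕜 := ℝ) hlip (fun p _ => hgm p) (hgi p₀)
    (aestronglyMeasurable_fderiv_of_ae_differentiableAt hgm hgdiff)
    (Eventually.of_forall fun x p hp => ?_) hbound
    (hgdiff.mono fun x hx => hx.hasFDerivAt)).2.differentiableAt
  by_cases hx : x ∈ K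
  · simpa only [indicator_of_mem hx, mul_assoc, NNReal.coe_mul, coe_nnnorm] using
      norm_lineAverage_indicator_sub_le hw hwc hρ hMw hMρ (hL p) (hL p₀) (δ := C * ‖p - p₀‖₊)
        (hp x)
  · simp only [g, indicator_of_notMem hx, hzero _ x hx, sub_self, norm_zero, zero_mul, le_refl]

/-! ### Differentiability of the mass of a cell cut out by finitely many constraints -/

section SignChange

variable {P : Type*} [NormedAddCommGroup P] [NormedSpace ℝ P]
  {E : Type*} [NormedAddCommGroup E] [NormedSpace ℝ E]

theorem abs_le_abs_sub_of_not_nonneg_iff {a b : ℝ} (h : ¬(0 ≤ a ↔ 0 ≤ b)) : |b| ≤ |a - b| := by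
  rcases le_or_gt 0 a with ha | ha <;> rcases le_or_gt 0 b with hb | hb
  · exact absurd (iff_of_true ha hb) h
  · rw [abs_of_neg hb, abs_of_nonneg] <;> linarith
  · rw [abs_of_nonneg hb, abs_of_neg] <;> linarith
  · exact absurd (iff_of_false ha.not_ge hb.not_ge) h

theorem eventually_nonneg_iff {W : Type*} [TopologicalSpace W] {f : W → ℝ} {q₀ : W}
    (hf : ContinuousAt f q₀) (h₀ : f q₀ ≠ 0) : ∀ᶠ q in 𝓝 q₀, 0 ≤ f q ↔ 0 ≤ f q₀ := by
  rcases h₀.lt_or_gt with hneg | hpos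
  · filter_upwards [hf.eventually (gt_mem_nhds hneg)] with q hq
    exact iff_of_false hq.not_ge hneg.not_ge
  · filter_upwards [hf.eventually (lt_mem_nhds hpos)] with q hq
    exact iff_of_true hq.le hpos.le

theorem eventually_fderiv_apply_ne_zero_of_eq_zero {f : E → ℝ} {x₀ v : E}
    (hf : ContDiffAt ℝ 1 f x₀) (h : f x₀ = 0 → fderiv ℝ f x₀ v ≠ 0) :
    ∀ᶠ x in 𝓝 x₀, f x = 0 → fderiv ℝ f x v ≠ 0 := by
  by_cases h₀ : f x₀ = 0
  · have hcont : ContinuousAt (fun x => fderiv ℝ f x v) x₀ :=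
      (hf.fderiv_right (m := 0) (by norm_num)).continuousAt.clm_apply continuousAt_const
    exact (hcont.eventually_ne (h h₀)).mono fun x hx _ => hx
  · exact (hf.continuousAt.eventually_ne h₀).mono fun x hx hx0 => absurd hx0 hx

theorem exists_nhds_volume_line_sign_change_le {f : P × E → ℝ} {f' : P × E →L[ℝ] ℝ} {p₀ : P}
    {x₀ e : E} (hf : HasStrictFDerivAt f f' (p₀, x₀)) (he : f (p₀, x₀) = 0 → f' (0, e) ≠ 0) :
    ∃ t ∈ 𝓝 (p₀, x₀), ∃ C : ℝ≥0, ∀ p x,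
      volume {s : ℝ | (p, x + s • e) ∈ t ∧ (p₀, x + s • e) ∈ t ∧
        ¬(0 ≤ f (p, x + s • e) ↔ 0 ≤ f (p₀, x + s • e))} ≤ C * ‖p - p₀‖ₑ := by
  by_cases h₀ : f (p₀, x₀) = 0
  swap
  · refine ⟨_, eventually_nonneg_iff hf.continuousAt h₀, 0, fun p x => ?_⟩
    refine (measure_mono_null (fun s hs => ?_) measure_empty).trans_le zero_le
    exact hs.2.2 (hs.1.trans hs.2.1.symm)
  obtain ⟨t, ht, hslope⟩ := exists_nhds_abs_sub_sub_le_half hf (he h₀)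
  obtain ⟨K, u, hu, hK⟩ := hf.exists_lipschitzOnWith
  set a := f' (0, e)
  refine ⟨t ∩ u, inter_mem ht hu, 4 * K / ‖a‖₊, fun p x => ?_⟩
  have hsmall (s : ℝ) (hps : (p, x + s • e) ∈ u) (hs : (p₀, x + s • e) ∈ u)
      (hsign : ¬(0 ≤ f (p, x + s • e) ↔ 0 ≤ f (p₀, x + s • e))) :
      |f (p₀, x + s • e)| ≤ K * ‖p - p₀‖ := by
    have hdist := hK.dist_le_mul _ hps _ hs
    rw [Real.dist_eq, dist_eq_norm] at hdist
    simpa [Prod.norm_def] using (abs_le_abs_sub_of_not_nonneg_iff hsign).trans hdist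
  refine (Real.volume_le_diam _).trans (Metric.ediam_le ?_)
  rintro s ⟨⟨-, hps⟩, ⟨hs, hs_u⟩, hsign⟩ s' ⟨⟨-, hps'⟩, ⟨hs', hs_u'⟩, hsign'⟩
  have hstep : ((p₀, x + s' • e) : P × E) + (s - s') • ((0, e) : P × E) = (p₀, x + s • e) := by
    ext <;> simp [sub_smul]
  have h := hslope _ hs' (s - s') (by rwa [hstep])
  rw [hstep] at h
  have hs_small := hsmall s hps hs_u hsign
  have hs_small' := hsmall s' hps' hs_u' hsign'
  have hprod : |(s - s') * a| ≤ 4 * K * ‖p - p₀‖ := by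
    rw [abs_le] at h hs_small hs_small'
    rcases abs_cases ((s - s') * a) with ⟨h', -⟩ | ⟨h', -⟩ <;> rw [h'] at h ⊢ <;> linarith
  rw [edist_nndist, enorm_eq_nnnorm, ← ENNReal.coe_mul, ENNReal.coe_le_coe, ← NNReal.coe_le_coe]
  rw [abs_mul] at hprod
  simpa [Real.dist_eq, div_mul_eq_mul_div, le_div_iff₀ (abs_pos.2 (he h₀))] using hprod

theorem exists_ne_zero_forall_apply_ne_zero {ι M : Type*} [Finite ι] [AddCommGroup M] [Module ℝ M]
    [Nontrivial M] {φ : ι → M →ₗ[ℝ] ℝ} (hφ : ∀ i, φ i ≠ 0) : ∃ e ≠ 0, ∀ i, φ i e ≠ 0 := by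
  obtain ⟨e, he⟩ := Module.Dual.exists_forall_ne_zero_of_forall_exists φ
    fun i => DFunLike.ne_iff.1 (hφ i)
  rcases isEmpty_or_nonempty ι with hι | ⟨⟨i⟩⟩
  · exact (exists_ne (0 : M)).imp fun e he => ⟨he, hι.elim⟩
  · exact ⟨e, fun h => he i (by rw [h, map_zero]), he⟩

end SignChange

theorem ae_forall_add_smul_notMem_of_hausdorffMeasure_eq_zero {E : Type*} [NormedAddCommGroup E]
    [InnerProductSpace ℝ E] [FiniteDimensional ℝ E] [MeasurableSpace E] [BorelSpace E]
    (μ : Measure E) [μ.IsAddHaarMeasure] {e : E} (he : e ≠ 0) {Z : Set E}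
    (hZ : μH[(Module.finrank ℝ E : ℝ) - 1] Z = 0) : ∀ᵐ x ∂μ, ∀ s : ℝ, x + s • e ∉ Z := by
  let K := (Submodule.span ℝ {e})ᗮ
  let π : E →L[ℝ] K := K.orthogonalProjectionOnto
  have hπe : π e = 0 := by
    refine Submodule.orthogonalProjectionOnto_apply_of_mem_orthogonal ?_
    rw [Submodule.orthogonal_orthogonal]
    exact Submodule.mem_span_singleton_self e
  have hπ_surj : Function.Surjective π := fun z =>
    ⟨z, Submodule.orthogonalProjectionOnto_mem_subspace_eq_self z⟩
  have hπ_lip : LipschitzWith 1 π :=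
    π.lipschitz.weaken (Submodule.orthogonalProjectionOnto_norm_le K)
  have hfinrank : (Module.finrank ℝ K : ℝ) = (Module.finrank ℝ E : ℝ) - 1 := by
    have hadd := (Submodule.span ℝ {e}).finrank_add_finrank_orthogonal
    rw [finrank_span_singleton he] at hadd
    rw [← hadd]
    push_cast
    ring
  have hπZ : μH[(Module.finrank ℝ K : ℝ)] (π '' Z) = 0 := by
    have hle := hπ_lip.hausdorffMeasure_image_le (Nat.cast_nonneg (Module.finrank ℝ K)) Z
    rwa [hfinrank, hZ, mul_zero, nonpos_iff_eq_zero, ← hfinrank] at hle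
  let T := toMeasurable μH[(Module.finrank ℝ K : ℝ)] (π '' Z)
  have hT : ∀ᵐ z : K ∂μH[(Module.finrank ℝ K : ℝ)], z ∈ Tᶜ :=
    measure_eq_zero_iff_ae_notMem.1 ((measure_toMeasurable _).trans hπZ)
  filter_upwards [(ae_comp_linearMap_mem_iff (π : E →ₗ[ℝ] K) μ μH[(Module.finrank ℝ K : ℝ)]
    hπ_surj (measurableSet_toMeasurable _ _).compl).2 hT] with x hx s hxs
  exact hx (subset_toMeasurable _ _ ⟨x + s • e, hxs, by simp [hπe]⟩)

section ConstraintCell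

/-- The cell `{x ∈ Ω | F k (p, x) ≥ 0 for all k}`, moving with the parameter `p`. -/
def constraintCell {ι P E : Type*} (Ω : Set E) (F : ι → P × E → ℝ) (p : P) : Set E :=
  {x ∈ Ω | ∀ k, 0 ≤ F k (p, x)}

theorem measurableSet_inter_preimage_of_continuousOn {α β : Type*} [TopologicalSpace α]
    [MeasurableSpace α] [OpensMeasurableSpace α] [TopologicalSpace β] [MeasurableSpace β]
    [BorelSpace β] {f : α → β} {s : Set α} {t : Set β} (hs : MeasurableSet s)
    (hf : ContinuousOn f s) (ht : MeasurableSet t) : MeasurableSet (s ∩ f ⁻¹' t) := by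
  rw [← Subtype.image_preimage_coe]
  exact hs.subtype_image (hf.domRestrict.measurable ht)

theorem measurableSet_constraintCell {ι P E : Type*} [Finite ι] [TopologicalSpace P]
    [TopologicalSpace E] [MeasurableSpace E] [BorelSpace E] {Ω : Set E} {F : ι → P × E → ℝ}
    (hΩ : IsOpen Ω) {p : P} (hF : ∀ k, ∀ x ∈ Ω, ContinuousAt (F k) (p, x)) :
    MeasurableSet (constraintCell Ω F p) := by
  have hcont (k : ι) : ContinuousOn (fun x => F k (p, x)) Ω := fun x hx =>
    ((hF k x hx).comp (f := fun x => (p, x)) (by fun_prop)).continuousWithinAt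
  exact measurableSet_inter_preimage_of_continuousOn hΩ.measurableSet (continuousOn_pi.2 hcont)
    measurableSet_Ici

variable {ι : Type*} [Finite ι] {P : Type*} [NormedAddCommGroup P] [NormedSpace ℝ P]
  {E : Type*} [NormedAddCommGroup E]

theorem differentiableMassNear_line_constraintCell [NormedSpace ℝ E] [CompleteSpace P]
    {Ω : Set E} (hΩ : IsOpen Ω) {F : ι → P × E → ℝ} {p₀ : P} {x e : E} {s₀ : ℝ}
    (hx : x + s₀ • e ∈ Ω) (hF : ∀ k, ContDiffAt ℝ 1 (F k) (p₀, x + s₀ • e))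
    (hunique : ∀ k l, F k (p₀, x + s₀ • e) = 0 → F l (p₀, x + s₀ • e) = 0 → k = l)
    (hne : ∀ k, F k (p₀, x + s₀ • e) = 0 → fderiv ℝ (F k) (p₀, x + s₀ • e) (0, e) ≠ 0) :
    DifferentiableMassNear volume (fun p => {s : ℝ | x + s • e ∈ constraintCell Ω F p}) p₀ s₀ := by
  let line' : P × ℝ →L[ℝ] P × E := (ContinuousLinearMap.fst ℝ P ℝ).prod
    ((ContinuousLinearMap.snd ℝ P ℝ).smulRight e)
  have hline : HasStrictFDerivAt (fun q : P × ℝ => (q.1, x + q.2 • e)) line' (p₀, s₀) :=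
    hasStrictFDerivAt_fst.prodMk
      (((ContinuousLinearMap.snd ℝ P ℝ).smulRight e).hasStrictFDerivAt.const_add x)
  have hFline (k : ι) : HasStrictFDerivAt (fun q : P × ℝ => F k (q.1, x + q.2 • e))
      (fderiv ℝ (F k) (p₀, x + s₀ • e) ∘L line') (p₀, s₀) :=
    ((hF k).hasStrictFDerivAt one_ne_zero).comp (p₀, s₀) hline
  refine (differentiableMassNear_forall_nonneg hFline hunique
    fun k hk => by simpa [line'] using hne k hk).congr ?_
  have hΩ_near : ∀ᶠ q : P × ℝ in 𝓝 (p₀, s₀), x + q.2 • e ∈ Ω :=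
    (by fun_prop : Continuous fun q : P × ℝ => x + q.2 • e).continuousAt.eventually
      (hΩ.mem_nhds hx)
  filter_upwards [hΩ_near] with q hq using and_iff_right hq

theorem exists_nhds_volume_line_symmDiff_constraintCell_le [NormedSpace ℝ E] (Ω : Set E)
    {F : ι → P × E → ℝ} {p₀ : P} {x₀ e : E} (hF : ∀ k, ContDiffAt ℝ 1 (F k) (p₀, x₀))
    (hne : ∀ k, F k (p₀, x₀) = 0 → fderiv ℝ (F k) (p₀, x₀) (0, e) ≠ 0) :
    ∃ B ∈ 𝓝 x₀, ∃ C : ℝ≥0, ∀ᶠ p in 𝓝 p₀, ∀ x,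
      volume {s : ℝ | x + s • e ∈ B ∩ constraintCell Ω F p ∆ constraintCell Ω F p₀} ≤
        C * ‖p - p₀‖ₑ := by
  have := Fintype.ofFinite ι
  choose t ht C hC using fun k =>
    exists_nhds_volume_line_sign_change_le ((hF k).hasStrictFDerivAt one_ne_zero) (hne k)
  obtain ⟨A, hA, B, hB, hAB⟩ := mem_nhds_prod_iff.1 (iInter_mem.2 ht)
  refine ⟨B, hB, ∑ k, C k, ?_⟩
  filter_upwards [hA] with p hp x
  have hsub : {s : ℝ | x + s • e ∈ B ∩ constraintCell Ω F p ∆ constraintCell Ω F p₀} ⊆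
      ⋃ k, {s : ℝ | (p, x + s • e) ∈ t k ∧ (p₀, x + s • e) ∈ t k ∧
        ¬(0 ≤ F k (p, x + s • e) ↔ 0 ≤ F k (p₀, x + s • e))} := by
    rintro s ⟨hsB, hs⟩
    by_contra hall
    simp only [mem_iUnion, mem_ofPred_eq, not_exists, not_and, not_not] at hall
    refine (not_xor _ _).2 (and_congr_right fun _ => forall_congr' fun k => ?_) hs
    exact hall k (mem_iInter.1 (hAB ⟨hp, hsB⟩) k)
      (mem_iInter.1 (hAB ⟨mem_of_mem_nhds hA, hsB⟩) k)
  calc _ ≤ _ := measure_mono hsub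
    _ ≤ ∑ k, C k * ‖p - p₀‖ₑ := (measure_iUnion_fintype_le _ _).trans
        (Finset.sum_le_sum fun k _ => hC k p x)
    _ = _ := by push_cast; rw [Finset.sum_mul]

theorem differentiableMassNear_constraintCell [InnerProductSpace ℝ E] [FiniteDimensional ℝ E]
    [Nontrivial E] [MeasurableSpace E] [BorelSpace E] (μ : Measure E) [μ.IsAddHaarMeasure]
    [FiniteDimensional ℝ P] {Ω : Set E} (hΩ : IsOpen Ω) {F : ι → P × E → ℝ}
    (hF : ∀ k p, ∀ x ∈ Ω, ContDiffAt ℝ 1 (F k) (p, x)) {p₀ : P}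
    (hgrad : ∀ k, ∀ x ∈ Ω, F k (p₀, x) = 0 → fderiv ℝ (F k) (p₀, x) ∘L .inr ℝ P E ≠ 0)
    (hnull : ∀ k l, k ≠ l →
      μH[(Module.finrank ℝ E : ℝ) - 1] {x ∈ Ω | F k (p₀, x) = 0 ∧ F l (p₀, x) = 0} = 0)
    {x₀ : E} (hx₀ : x₀ ∈ Ω) :
    DifferentiableMassNear μ (constraintCell Ω F) p₀ x₀ := by
  have := FiniteDimensional.complete ℝ P
  obtain ⟨e, he, htransverse⟩ : ∃ e ≠ 0, ∀ k : {k // F k (p₀, x₀) = 0},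
      fderiv ℝ (F k) (p₀, x₀) (0, e) ≠ 0 :=
    exists_ne_zero_forall_apply_ne_zero
      (φ := fun k : {k // F k (p₀, x₀) = 0} =>
        (fderiv ℝ (F k) (p₀, x₀) ∘L .inr ℝ P E : E →L[ℝ] ℝ).toLinearMap)
      fun k h => hgrad k x₀ hx₀ k.2 (ContinuousLinearMap.coe_injective h)
  obtain ⟨B, hB, C, hlip⟩ := exists_nhds_volume_line_symmDiff_constraintCell_le Ω
    (fun k => hF k p₀ x₀ hx₀) fun k hk => htransverse ⟨k, hk⟩
  have htransverse_near : ∀ᶠ x in 𝓝 x₀, ∀ k, F k (p₀, x) = 0 →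
      fderiv ℝ (F k) (p₀, x) (0, e) ≠ 0 := eventually_all.2 fun k =>
    (Continuous.prodMk_right p₀).continuousAt.eventually
      (eventually_fderiv_apply_ne_zero_of_eq_zero (hF k p₀ x₀ hx₀) fun hk => htransverse ⟨k, hk⟩)
  have hsimple : ∀ᵐ x ∂μ, ∀ k l, k ≠ l → ∀ s : ℝ,
      x + s • e ∉ {x ∈ Ω | F k (p₀, x) = 0 ∧ F l (p₀, x) = 0} := by
    simp_rw [ae_all_iff]
    exact fun k l hkl =>
      ae_forall_add_smul_notMem_of_hausdorffMeasure_eq_zero μ he (hnull k l hkl)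
  refine ⟨_, inter_mem (inter_mem hB (hΩ.mem_nhds hx₀)) htransverse_near, fun ρ hρ hρc hρU => ?_⟩
  refine differentiableAt_integral_indicator_of_lines μ
    (fun p => measurableSet_constraintCell hΩ fun k x hx => (hF k p x hx).continuousAt)
    hρ hρc e (C := C) (hlip.mono fun p hp x => (measure_mono fun s hs => ?_).trans (hp x)) ?_
  · exact ⟨(hρU hs.1).1.1, hs.2⟩
  · filter_upwards [hsimple] with x hx s hs
    obtain ⟨⟨-, hsΩ⟩, hne⟩ := hρU hs
    refine differentiableMassNear_line_constraintCell hΩ hsΩ (fun k => hF k p₀ _ hsΩ) ?_ hne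
    exact fun k l hk hl => by_contra fun hkl => hx k l hkl s ⟨hsΩ, hk, hl⟩

end ConstraintCell

/-! ### Mass of the strips of a Lipschitz function that changes sign -/

section NullZeroSet

variable {E : Type*} [NormedAddCommGroup E] [NormedSpace ℝ E] [FiniteDimensional ℝ E]
  [MeasurableSpace E] [BorelSpace E]

theorem addHaar_eq_zero_of_eqOn_zero_of_hasFDerivWithinAt_ne_zero (μ : Measure E)
    [μ.IsAddHaarMeasure] {s : Set E} {f : E → ℝ} {f' : E → E →L[ℝ] ℝ} (hs : MeasurableSet s)
    (hf : EqOn f 0 s) (hf' : ∀ x ∈ s, HasFDerivWithinAt f (f' x) s x) (hne : ∀ x ∈ s, f' x ≠ 0) :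
    μ s = 0 := by
  rcases subsingleton_or_nontrivial E with hE | hE
  · rw [eq_empty_of_forall_notMem fun x hx => hne x hx (Subsingleton.elim _ _), measure_empty]
  obtain ⟨e, he⟩ := exists_ne (0 : E)
  have happrox : ApproximatesLinearOn (fun x => f x • e) (0 : E →L[ℝ] E) s 0 :=
    fun x hx y hy => by simp [hf hx, hf hy]
  have hderiv := happrox.norm_fderiv_sub_le μ hs (fun x => (f' x).smulRight e)
    fun _ hx => (hf' _ hx).smul_const e
  have hfalse : ∀ᵐ _ ∂μ.restrict s, False := by
    filter_upwards [hderiv, ae_restrict_mem hs] with x hx hxs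
    obtain hzero | hzero : f' x = 0 ∨ e = 0 := by simpa using hx
    exacts [hne x hxs hzero, he hzero]
  simpa using hfalse

end NullZeroSet

section LevelStrip

theorem ofReal_le_mul_volume_of_lipschitzOnWith {h : ℝ → ℝ} {K : ℝ≥0} {η : ℝ}
    (hh : LipschitzOnWith K h (Icc 0 1)) (h0 : h 0 ≤ 0) (h1 : η ≤ h 1) :
    ENNReal.ofReal η ≤ K * volume {s ∈ Icc (0 : ℝ) 1 | h s ∈ Ioc 0 η} := by
  have hsurj : Ioc 0 η ⊆ h '' {s ∈ Icc (0 : ℝ) 1 | h s ∈ Ioc 0 η} := by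
    rintro z hz
    obtain ⟨s, hs, rfl⟩ := intermediate_value_Icc zero_le_one hh.continuousOn
      (⟨h0.trans hz.1.le, hz.2.trans h1⟩ : z ∈ Icc (h 0) (h 1))
    exact ⟨s, ⟨hs, hz⟩, rfl⟩
  have himage := (hh.mono (sep_subset _ fun s => h s ∈ Ioc 0 η)).hausdorffMeasure_image_le
    (d := 1) zero_le_one
  calc ENNReal.ofReal η = volume (Ioc 0 η) := by simp
    _ ≤ volume (h '' {s ∈ Icc (0 : ℝ) 1 | h s ∈ Ioc 0 η}) := measure_mono hsurj
    _ ≤ K * volume {s ∈ Icc (0 : ℝ) 1 | h s ∈ Ioc 0 η} := by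
      simpa [hausdorffMeasure_real] using himage

variable {E : Type*} [NormedAddCommGroup E] [NormedSpace ℝ E]

theorem ofReal_le_mul_volume_line_of_lipschitzOnWith {B : Set E} {g : E → ℝ} {K : ℝ≥0} {η : ℝ}
    {x v : E} (hB : Convex ℝ B) (hg : LipschitzOnWith K g B) (hx : x ∈ B) (hxv : x + v ∈ B)
    (h0 : g x ≤ 0) (h1 : η ≤ g (x + v)) :
    ENNReal.ofReal η ≤
      (K * ‖v‖₊ : ℝ≥0) * volume {s ∈ Icc (0 : ℝ) 1 | x + s • v ∈ B ∩ g ⁻¹' Ioc 0 η} := by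
  have hseg : MapsTo (fun s : ℝ => x + s • v) (Icc 0 1) B := fun s hs =>
    hB.add_smul_mem hx hxv hs
  have hline : LipschitzOnWith ‖v‖₊ (fun s : ℝ => x + s • v) (Icc 0 1) :=
    (LipschitzWith.of_dist_le_mul fun s t => by
      rw [dist_add_left, dist_eq_norm, ← sub_smul, norm_smul, coe_nnnorm, mul_comm,
        dist_eq_norm]).lipschitzOnWith
  refine (ofReal_le_mul_volume_of_lipschitzOnWith (hg.comp hline hseg) (by simpa using h0)
    (by simpa using h1)).trans ?_
  gcongr
  exact fun hs => ⟨hseg ‹_›, hs⟩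

variable [FiniteDimensional ℝ E] [MeasurableSpace E] [BorelSpace E]

theorem ofReal_mul_measure_le_of_lipschitzOnWith (μ : Measure E) [μ.IsAddHaarMeasure]
    {A B : Set E} {g : E → ℝ} {K : ℝ≥0} {η : ℝ} {v : E} (hBo : IsOpen B) (hB : Convex ℝ B)
    (hg : LipschitzOnWith K g B) (hA : MeasurableSet A) (hAB : A ⊆ B)
    (hAv : ∀ x ∈ A, x + v ∈ B) (h0 : ∀ x ∈ A, g x ≤ 0) (h1 : ∀ x ∈ A, η ≤ g (x + v)) :
    ENNReal.ofReal η * μ A ≤ (K * ‖v‖₊ : ℝ≥0) * μ (B ∩ g ⁻¹' Ioc 0 η) := by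
  have hstrip : MeasurableSet (B ∩ g ⁻¹' Ioc 0 η) :=
    measurableSet_inter_preimage_of_continuousOn hBo.measurableSet hg.continuousOn measurableSet_Ioc
  calc ENNReal.ofReal η * μ A = ∫⁻ _ in A, ENNReal.ofReal η ∂μ := by rw [setLIntegral_const]
    _ ≤ ∫⁻ x in A, (K * ‖v‖₊ : ℝ≥0) *
        volume {s ∈ Icc (0 : ℝ) 1 | x + s • v ∈ B ∩ g ⁻¹' Ioc 0 η} ∂μ :=
      setLIntegral_mono' hA fun x hx => ofReal_le_mul_volume_line_of_lipschitzOnWith hB hg (hAB hx)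
        (hAv x hx) (h0 x hx) (h1 x hx)
    _ ≤ ∫⁻ x, (K * ‖v‖₊ : ℝ≥0) *
        volume {s ∈ Icc (0 : ℝ) 1 | x + s • v ∈ B ∩ g ⁻¹' Ioc 0 η} ∂μ :=
      setLIntegral_le_lintegral _ _
    _ = (K * ‖v‖₊ : ℝ≥0) * μ (B ∩ g ⁻¹' Ioc 0 η) := by
      rw [lintegral_const_mul' _ _ ENNReal.coe_ne_top,
        lintegral_volume_line v measurableSet_Icc hstrip]
      simp

theorem exists_ofReal_mul_le_measure_of_lipschitzOnWith (μ : Measure E) [μ.IsAddHaarMeasure]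
    {B : Set E} {g : E → ℝ} {K : ℝ≥0} {a b : E} (hBo : IsOpen B) (hB : Convex ℝ B)
    (hg : LipschitzOnWith K g B) (ha : a ∈ B) (hb : b ∈ B) (hga : g a < 0) (hgb : 0 < g b) :
    ∃ c > 0, ∀ᶠ η in 𝓝[>] 0, ENNReal.ofReal (c * η) ≤ μ (B ∩ g ⁻¹' Ioc 0 η) := by
  have hneg : ∀ᶠ x in 𝓝 a, x ∈ B ∧ g x < 0 := (hBo.eventually_mem ha).and
    ((hg.continuousOn.continuousAt (hBo.mem_nhds ha)).eventually_lt_const hga)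
  have hpos : ∀ᶠ x in 𝓝 b, x ∈ B ∧ g b / 2 < g x := (hBo.eventually_mem hb).and
    ((hg.continuousOn.continuousAt (hBo.mem_nhds hb)).eventually_const_lt (half_lt_self hgb))
  have hshift : Tendsto (fun x => x + (b - a)) (𝓝 a) (𝓝 b) := by
    simpa using (continuous_add_const (b - a)).tendsto a
  obtain ⟨r, hr, hball⟩ := Metric.eventually_nhds_iff_ball.1 (hneg.and (hshift.eventually hpos))
  set M : ℝ≥0 := K * ‖b - a‖₊ + 1
  have hM : (0 : ℝ) < M := by positivity
  have hball0 : μ (Metric.ball a r) ≠ 0 := (Metric.measure_ball_pos μ a hr).ne'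
  have hballTop : μ (Metric.ball a r) ≠ ⊤ := measure_ball_lt_top.ne
  refine ⟨μ.real (Metric.ball a r) / M, div_pos (ENNReal.toReal_pos hball0 hballTop) hM, ?_⟩
  filter_upwards [Ioc_mem_nhdsGT (half_pos hgb)] with η hη
  have hle := ofReal_mul_measure_le_of_lipschitzOnWith μ (η := η) (v := b - a) hBo hB hg
    measurableSet_ball (fun x hx => (hball x hx).1.1) (fun x hx => (hball x hx).2.1)
    (fun x hx => (hball x hx).1.2.le) (fun x hx => hη.2.trans (hball x hx).2.2.le)
  rw [div_mul_eq_mul_div, ENNReal.ofReal_div_of_pos hM, mul_comm, ENNReal.ofReal_mul hη.1.le,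
    ofReal_measureReal hballTop, ENNReal.ofReal_coe_nnreal]
  refine ENNReal.div_le_of_le_mul' (hle.trans ?_)
  gcongr
  exact le_self_add

theorem exists_mem_frequently_neg_frequently_pos {T : Type*} [TopologicalSpace T]
    [MeasurableSpace T] (μ : Measure T) [μ.IsOpenPosMeasure] {U : Set T} {g : T → ℝ}
    (hU : IsOpen U) (hUc : IsPreconnected U) (hg : ContinuousOn g U)
    (hnull : μ (U ∩ g ⁻¹' {0}) = 0) (hneg : ∃ a ∈ U, g a < 0) (hpos : ∃ b ∈ U, 0 < g b) :
    ∃ x ∈ U, (∃ᶠ y in 𝓝 x, g y < 0) ∧ ∃ᶠ y in 𝓝 x, 0 < g y := by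
  by_contra! hcon
  obtain ⟨a, haU, ha⟩ := hneg
  obtain ⟨b, hbU, hb⟩ := hpos
  have hcover : U ⊆ {x | ∀ᶠ y in 𝓝 x, 0 ≤ g y} ∪ {x | ∀ᶠ y in 𝓝 x, g y ≤ 0} := fun x hx =>
    or_iff_not_imp_left.2 fun h =>
      hcon x hx (by simpa only [mem_ofPred_eq, not_eventually, not_le] using h)
  have hbpos : ∀ᶠ y in 𝓝 b, 0 ≤ g y :=
    ((hg.continuousAt (hU.mem_nhds hbU)).eventually_const_lt hb).mono fun _ => le_of_lt
  have haneg : ∀ᶠ y in 𝓝 a, g y ≤ 0 :=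
    ((hg.continuousAt (hU.mem_nhds haU)).eventually_lt_const ha).mono fun _ => le_of_lt
  obtain ⟨x, hxU, hxpos, hxneg⟩ := hUc _ _ isOpen_setOfPred_eventually_nhds
    isOpen_setOfPred_eventually_nhds hcover ⟨b, hbU, hbpos⟩ ⟨a, haU, haneg⟩
  have hzero : U ∩ g ⁻¹' {0} ∈ 𝓝 x := by
    filter_upwards [hU.mem_nhds hxU, hxpos, hxneg] with y hyU h₁ h₂
    exact ⟨hyU, le_antisymm h₂ h₁⟩
  exact (μ.measure_pos_of_mem_nhds hzero).ne' hnull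

-- `x₀` is a point near which `g` takes both signs: a segment joining them crosses the strip.
theorem exists_mem_forall_nhds_exists_ofReal_mul_le_measure (μ : Measure E) [μ.IsAddHaarMeasure]
    {U : Set E} {g : E → ℝ} (hU : IsOpen U) (hUc : IsPreconnected U)
    (hg : LocallyLipschitzOn U g) (hnull : μ (U ∩ g ⁻¹' {0}) = 0)
    (hneg : ∃ a ∈ U, g a < 0) (hpos : ∃ b ∈ U, 0 < g b) :
    ∃ x₀ ∈ U, ∀ V ∈ 𝓝 x₀, ∃ c > 0, ∀ᶠ η in 𝓝[>] 0,
      ENNReal.ofReal (c * η) ≤ μ (V ∩ g ⁻¹' Ioc 0 η) := by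
  obtain ⟨x₀, hx₀, hfneg, hfpos⟩ :=
    exists_mem_frequently_neg_frequently_pos μ hU hUc hg.continuousOn hnull hneg hpos
  refine ⟨x₀, hx₀, fun V hV => ?_⟩
  obtain ⟨K, t, ht, hKt⟩ := hg hx₀
  rw [hU.nhdsWithin_eq hx₀] at ht
  obtain ⟨r, hr, hball⟩ := Metric.mem_nhds_iff.1 (inter_mem ht hV)
  obtain ⟨a, hga, ha⟩ := (hfneg.and_eventually (Metric.ball_mem_nhds x₀ hr)).exists
  obtain ⟨b, hgb, hb⟩ := (hfpos.and_eventually (Metric.ball_mem_nhds x₀ hr)).exists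
  obtain ⟨c, hc, hstrip⟩ := exists_ofReal_mul_le_measure_of_lipschitzOnWith μ Metric.isOpen_ball
    (convex_ball x₀ r) (hKt.mono fun x hx => (hball hx).1) ha hb hga hgb
  exact ⟨c, hc, hstrip.mono fun η hη =>
    hη.trans (measure_mono (inter_subset_inter_left _ fun x hx => (hball hx).2))⟩

end LevelStrip

/-! ### The gap between two families, and first-order growth -/

section Gap

variable {ι : Type*}

theorem lipschitzWith_finset_sup' [Fintype ι] {s : Finset ι} (hs : s.Nonempty) :
    LipschitzWith 1 (fun a : ι → ℝ => s.sup' hs a) := by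
  refine LipschitzWith.of_le_add fun a b => Finset.sup'_le hs a fun i hi => ?_
  have hle : b i ≤ s.sup' hs b := Finset.le_sup' b hi
  have hdist : a i - b i ≤ dist a b := (le_abs_self _).trans (dist_le_pi_dist a b i)
  linarith

variable [Fintype ι] [DecidableEq ι] {S : Finset ι} (hS : S.Nonempty) (hSc : Sᶜ.Nonempty)

/-- The amount by which the maximum of `a` over the complement of `S` exceeds its maximum over
`S`. For `a i = G x i (ψ i)`, as a function of `x`, its zero level separates the cells with index
in `S` from the others. -/
def gap (a : ι → ℝ) : ℝ :=
  Sᶜ.sup' hSc a - S.sup' hS a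

theorem lipschitzWith_gap : LipschitzWith (1 + 1) (gap hS hSc) :=
  (lipschitzWith_finset_sup' hSc).sub (lipschitzWith_finset_sup' hS)

theorem gap_nonpos_iff {a : ι → ℝ} : gap hS hSc a ≤ 0 ↔ ∃ i ∈ S, ∀ j, a j ≤ a i := by
  rw [gap, sub_nonpos]
  refine ⟨fun h => ?_, fun ⟨i, hi, hmax⟩ =>
    (Finset.sup'_le hSc a fun j _ => hmax j).trans (Finset.le_sup' a hi)⟩
  obtain ⟨i, hi, hsup⟩ := Finset.exists_mem_eq_sup' hS a
  refine ⟨i, hi, fun j => hsup ▸ ?_⟩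
  by_cases hj : j ∈ S
  · exact Finset.le_sup' a hj
  · exact (Finset.le_sup' a (Finset.mem_compl.2 hj)).trans h

theorem gap_nonneg_of_forall_le {a : ι → ℝ} {j : ι} (hj : j ∈ Sᶜ) (hmax : ∀ i, a i ≤ a j) :
    0 ≤ gap hS hSc a :=
  sub_nonneg.2 ((Finset.sup'_le hS a fun i _ => hmax i).trans (Finset.le_sup' a hj))

theorem exists_eq_of_gap_eq_zero {a : ι → ℝ} (h : gap hS hSc a = 0) :
    ∃ i ∈ S, ∃ j ∈ Sᶜ, a i = a j := by
  obtain ⟨i, hi, hsupS⟩ := Finset.exists_mem_eq_sup' hS a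
  obtain ⟨j, hj, hsupSc⟩ := Finset.exists_mem_eq_sup' hSc a
  exact ⟨i, hi, j, hj, by rw [← hsupS, ← hsupSc, sub_eq_zero.1 h]⟩

theorem gap_le_gap_sub {a b : ι → ℝ} {η : ℝ} (hS_eq : ∀ i ∈ S, b i = a i)
    (hSc_le : ∀ j ∈ Sᶜ, b j ≤ a j - η) : gap hS hSc b ≤ gap hS hSc a - η := by
  have hsup : Sᶜ.sup' hSc b ≤ Sᶜ.sup' hSc a - η := Finset.sup'_le hSc b fun j hj =>
    (hSc_le j hj).trans (sub_le_sub_right (Finset.le_sup' a hj) η)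
  have heq : S.sup' hS b = S.sup' hS a := Finset.sup'_congr hS rfl hS_eq
  rw [gap, gap, heq]
  linarith

end Gap

section Graph

theorem connected_fromRel_of_forall_exists_rel {V : Type*} [Fintype V] [DecidableEq V] [Nonempty V]
    {r : V → V → Prop}
    (h : ∀ S : Finset V, S.Nonempty → Sᶜ.Nonempty → ∃ i ∈ S, ∃ j ∈ Sᶜ, r i j) :
    (SimpleGraph.fromRel r).Connected := by
  classical
  refine SimpleGraph.connected_iff_exists_forall_reachable _ |>.2 ⟨Classical.arbitrary V, ?_⟩
  by_contra! hcon
  obtain ⟨w, hw⟩ := hcon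
  obtain ⟨i, hi, j, hj, hij⟩ :=
    h {v | (SimpleGraph.fromRel r).Reachable (Classical.arbitrary V) v}
      ⟨Classical.arbitrary V, by simp⟩ ⟨w, by simpa using hw⟩
  rw [Finset.mem_compl, Finset.mem_filter_univ] at hj
  rw [Finset.mem_filter_univ] at hi
  have hne : i ≠ j := fun heq => hj (heq ▸ hi)
  exact hj (hi.trans ((SimpleGraph.fromRel_adj r i j).2 ⟨hne, Or.inl hij⟩).reachable)

end Graph

section Derivative

variable {ι : Type*} [Finite ι]

theorem hasDerivAt_sum_apply_add_smul {H : (ι → ℝ) → ι → ℝ} {ψ : ι → ℝ}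
    (hH : DifferentiableAt ℝ H ψ) (S : Finset ι) (w : ι → ℝ) :
    HasDerivAt (fun ε : ℝ => ∑ i ∈ S, H (ψ + ε • w) i) (∑ i ∈ S, fderiv ℝ H ψ w i) 0 := by
  cases nonempty_fintype ι
  have hline : HasDerivAt (fun ε : ℝ => ψ + ε • w) w 0 := by
    simpa using ((hasDerivAt_id (0 : ℝ)).smul_const w).const_add ψ
  have hcomp := (by simpa using hH.hasFDerivAt :
    HasFDerivAt H (fderiv ℝ H ψ) (ψ + (0 : ℝ) • w)).comp_hasDerivAt 0 hline
  exact HasDerivAt.fun_sum fun i _ => hasDerivAt_pi.1 hcomp i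

theorem le_of_hasDerivAt_of_eventually_add_mul_le {f : ℝ → ℝ} {f' κ : ℝ} (hf : HasDerivAt f f' 0)
    (hgrowth : ∀ᶠ ε in 𝓝[>] 0, f 0 + κ * ε ≤ f ε) : κ ≤ f' := by
  have hslope := (hasDerivAt_iff_tendsto_slope.1 hf).mono_left
    (nhdsWithin_mono 0 fun x (hx : x ∈ Ioi 0) => hx.ne')
  refine ge_of_tendsto hslope ?_
  filter_upwards [hgrowth, self_mem_nhdsWithin] with ε hε hε0
  rw [slope_def_field, sub_zero, le_div_iff₀ hε0]
  linarith

theorem exists_fderiv_single_pos_of_eventually_add_mul_le [DecidableEq ι] {H : (ι → ℝ) → ι → ℝ}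
    {ψ : ι → ℝ} {S T : Finset ι} {κ : ℝ} (hH : DifferentiableAt ℝ H ψ) (hκ : 0 < κ)
    (hgrowth : ∀ᶠ ε in 𝓝[>] (0 : ℝ), ∑ i ∈ S, H ψ i + κ * ε ≤
      ∑ i ∈ S, H (ψ + ε • ∑ j ∈ T, Pi.single j 1) i) :
    ∃ i ∈ S, ∃ j ∈ T, 0 < fderiv ℝ H ψ (Pi.single j 1) i := by
  have hderiv := hκ.trans_le (le_of_hasDerivAt_of_eventually_add_mul_le
    (hasDerivAt_sum_apply_add_smul hH S (∑ j ∈ T, Pi.single j 1)) (by simpa using hgrowth))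
  by_contra! hcon
  refine hderiv.not_ge (Finset.sum_nonpos fun i hi => ?_)
  rw [map_sum, Finset.sum_apply]
  exact Finset.sum_nonpos fun j hj => hcon i hi j hj

end Derivative

section Density

variable {E : Type*} [MeasurableSpace E] {μ : Measure E} {ρ : E → ℝ} {s t : Set E}

theorem mul_le_measureReal_withDensity {m a : ℝ}
    [IsFiniteMeasure (μ.withDensity fun x => ENNReal.ofReal (ρ x))] (hρ : Measurable ρ)
    (hm0 : 0 ≤ m) (hm : ∀ x ∈ s, m ≤ ρ x) (ha : ENNReal.ofReal a ≤ μ s) :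
    m * a ≤ (μ.withDensity fun x => ENNReal.ofReal (ρ x)).real s := by
  refine (ENNReal.ofReal_le_iff_le_toReal (measure_ne_top _ _)).1 ?_
  calc ENNReal.ofReal (m * a) ≤ ENNReal.ofReal m * μ s := by
        rw [ENNReal.ofReal_mul hm0]
        gcongr
    _ = ∫⁻ _ in s, ENNReal.ofReal m ∂μ := by rw [setLIntegral_const]
    _ ≤ ∫⁻ x in s, ENNReal.ofReal (ρ x) ∂μ :=
      setLIntegral_mono hρ.ennreal_ofReal fun x hx => ENNReal.ofReal_le_ofReal (hm x hx)
    _ ≤ μ.withDensity (fun x => ENNReal.ofReal (ρ x)) s := withDensity_apply_le _ _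

theorem exists_mem_pos_notMem_of_withDensity_ne_zero (hρ : Measurable ρ)
    (hs : μ.withDensity (fun x => ENNReal.ofReal (ρ x)) s ≠ 0) (ht : μ t = 0) :
    ∃ x ∈ s, 0 < ρ x ∧ x ∉ t := by
  by_contra! hcon
  refine hs ((withDensity_apply_eq_zero hρ.ennreal_ofReal).2 (measure_mono_null ?_ ht))
  exact fun x hx => hcon x hx.2 (by simpa using hx.1)

end Density

section Decrease

theorem eventually_eventually_add_le_sub_mul {E : Type*} [NormedAddCommGroup E] [NormedSpace ℝ E]
    {f : E × ℝ → ℝ} {f' : E × ℝ →L[ℝ] ℝ} {x₀ : E} {v : ℝ} (hf : HasStrictFDerivAt f f' (x₀, v))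
    (hf' : f' (0, 1) < 0) :
    ∀ᶠ c in 𝓝[>] 0, ∀ᶠ q in 𝓝 x₀ ×ˢ 𝓝[>] (0 : ℝ), f (q.1, v + q.2) ≤ f (q.1, v) - c * q.2 := by
  obtain ⟨t, ht, hslope⟩ := exists_nhds_abs_sub_sub_le_half hf hf'.ne
  have hmem : ∀ᶠ q in 𝓝 x₀ ×ˢ 𝓝[>] (0 : ℝ), (q.1, v) ∈ t ∧ (q.1, v + q.2) ∈ t := by
    have hle : 𝓝 x₀ ×ˢ 𝓝[>] (0 : ℝ) ≤ 𝓝 (x₀, 0) := by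
      rw [nhds_prod_eq]
      exact prod_mono le_rfl nhdsWithin_le_nhds
    have hbase : ContinuousAt (fun q : E × ℝ => (q.1, v)) (x₀, 0) := by fun_prop
    have hshift : ContinuousAt (fun q : E × ℝ => (q.1, v + q.2)) (x₀, 0) := by fun_prop
    exact hle ((hbase.eventually_mem ht).and (hshift.eventually_mem (by simpa using ht)))
  filter_upwards [Ioc_mem_nhdsGT (half_pos (neg_pos.2 hf'))] with c hc
  filter_upwards [hmem, prod_mem_prod univ_mem self_mem_nhdsWithin] with q hq hq0
  have hε : 0 < q.2 := hq0.2
  have hbound := (abs_le.1 (hslope (q.1, v) hq.1 q.2 (by simpa using hq.2))).2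
  rw [abs_of_neg (mul_neg_of_pos_of_neg hε hf')] at hbound
  simp only [Prod.smul_mk, smul_zero, smul_eq_mul, mul_one, Prod.mk_add_mk, add_zero] at hbound
  linarith [mul_le_mul_of_nonneg_right hc.2 hε.le]

end Decrease

/-! ### Laguerre cells and their interfaces -/

section Laguerre

variable {Ω : Set (EuclideanSpace ℝ (Fin d))} {G : EuclideanSpace ℝ (Fin d) → Fin N → ℝ → ℝ}
  {Gx : EuclideanSpace ℝ (Fin d) → Fin N → ℝ → EuclideanSpace ℝ (Fin d)}
  {Gv : EuclideanSpace ℝ (Fin d) → Fin N → ℝ → ℝ} {ρ : EuclideanSpace ℝ (Fin d) → ℝ}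
  {ψ : Fin N → ℝ} {x : EuclideanSpace ℝ (Fin d)} {i j : Fin N}

theorem toDual_sub_toDual_ne_zero_of_mem_Gam
    (hTwist : ∀ x ∈ Ω, Function.Injective fun q : Fin N × ℝ => (G x q.1 q.2, Gx x q.1 q.2))
    (hij : i ≠ j) (hx : x ∈ Gam Ω G ψ i j) :
    InnerProductSpace.toDual ℝ _ (Gx x i (ψ i)) - InnerProductSpace.toDual ℝ _ (Gx x j (ψ j)) ≠
      0 := by
  rw [sub_ne_zero, (InnerProductSpace.toDual ℝ _).injective.ne_iff]
  intro hgrad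
  have hpair := hTwist x hx.1 (a₁ := (i, ψ i)) (a₂ := (j, ψ j)) (Prod.ext hx.2 hgrad)
  exact hij (congrArg Prod.fst hpair)

theorem continuousOn_generatingFunction
    (hG : ∀ i, ContDiffOn ℝ 1 (fun q : _ × ℝ => G q.1 i q.2) (Ω ×ˢ univ)) (i : Fin N) (v : ℝ) :
    ContinuousOn (fun x => G x i v) Ω :=
  (hG i).continuousOn.comp (f := fun x => (x, v)) (by fun_prop) fun _ hx => ⟨hx, mem_univ v⟩

theorem contDiffAt_generatingFunction (hΩ : IsOpen Ω)
    (hG : ∀ i, ContDiffOn ℝ 1 (fun q : _ × ℝ => G q.1 i q.2) (Ω ×ˢ univ)) (hx : x ∈ Ω)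
    (i : Fin N) (v : ℝ) : ContDiffAt ℝ 1 (fun q : _ × ℝ => G q.1 i q.2) (x, v) :=
  (hG i).contDiffAt ((hΩ.prod isOpen_univ).mem_nhds ⟨hx, mem_univ v⟩)

theorem volume_Gam_eq_zero (hΩ : IsOpen Ω)
    (hGx : ∀ x ∈ Ω, ∀ i v, HasGradientAt (fun x' => G x' i v) (Gx x i v) x)
    (hG : ∀ i, ContDiffOn ℝ 1 (fun q : _ × ℝ => G q.1 i q.2) (Ω ×ˢ univ))
    (hTwist : ∀ x ∈ Ω, Function.Injective fun q : Fin N × ℝ => (G x q.1 q.2, Gx x q.1 q.2))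
    (hij : i ≠ j) : volume (Gam Ω G ψ i j) = 0 := by
  have hpreimage : Gam Ω G ψ i j = Ω ∩ (fun x => G x i (ψ i) - G x j (ψ j)) ⁻¹' {0} := by
    ext x
    simp [Gam, sub_eq_zero]
  have hmeas : MeasurableSet (Gam Ω G ψ i j) := hpreimage ▸
    measurableSet_inter_preimage_of_continuousOn hΩ.measurableSet
      ((continuousOn_generatingFunction hG i _).sub (continuousOn_generatingFunction hG j _))
      (measurableSet_singleton 0)
  exact addHaar_eq_zero_of_eqOn_zero_of_hasFDerivWithinAt_ne_zero volume hmeas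
    (f := fun x => G x i (ψ i) - G x j (ψ j)) (fun x hx => sub_eq_zero.2 hx.2)
    (fun x hx => ((hGx x hx.1 i (ψ i)).hasFDerivAt.sub
      (hGx x hx.1 j (ψ j)).hasFDerivAt).hasFDerivWithinAt)
    (fun x hx => toDual_sub_toDual_ne_zero_of_mem_Gam hTwist hij hx)

/-! ### Differentiability of the mass function -/

/-- The constraint `G(x, yᵢ, ψᵢ) - G(x, yₖ, ψₖ) ≥ 0` of the `i`-th Laguerre cell, as a function of
`(ψ, x)`. The index `k = i` is left out because this constraint vanishes identically there. -/
def lagConstraint (G : EuclideanSpace ℝ (Fin d) → Fin N → ℝ → ℝ) (i : Fin N) (k : {k // k ≠ i})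
    (q : (Fin N → ℝ) × EuclideanSpace ℝ (Fin d)) : ℝ :=
  G q.2 i (q.1 i) - G q.2 k (q.1 k)

theorem Lag_eq_constraintCell (ψ : Fin N → ℝ) (i : Fin N) :
    Lag Ω G ψ i = constraintCell Ω (lagConstraint G i) ψ := by
  ext x
  simp only [Lag, constraintCell, lagConstraint, mem_ofPred_eq, sub_nonneg, Subtype.forall]
  refine and_congr_right fun _ => forall_congr' fun k => ⟨fun h _ => h, fun h => ?_⟩
  by_cases hk : k = i
  exacts [hk ▸ le_rfl, h hk]

theorem contDiffAt_lagConstraint (hΩ : IsOpen Ω)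
    (hG : ∀ i, ContDiffOn ℝ 1 (fun q : _ × ℝ => G q.1 i q.2) (Ω ×ˢ univ)) (i : Fin N)
    (k : {k // k ≠ i}) (ψ : Fin N → ℝ) (hx : x ∈ Ω) :
    ContDiffAt ℝ 1 (lagConstraint G i k) (ψ, x) := by
  have hcomp (k : Fin N) : ContDiffAt ℝ 1
      (fun q : (Fin N → ℝ) × EuclideanSpace ℝ (Fin d) => G q.2 k (q.1 k)) (ψ, x) :=
    (contDiffAt_generatingFunction hΩ hG hx k (ψ k)).comp
      (f := fun q : (Fin N → ℝ) × _ => (q.2, q.1 k)) (ψ, x) (by fun_prop)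
  exact (hcomp i).sub (hcomp k)

theorem measurableSet_Lag (hΩ : IsOpen Ω)
    (hG : ∀ i, ContDiffOn ℝ 1 (fun q : _ × ℝ => G q.1 i q.2) (Ω ×ˢ univ)) (ψ : Fin N → ℝ)
    (i : Fin N) : MeasurableSet (Lag Ω G ψ i) := by
  rw [Lag_eq_constraintCell]
  exact measurableSet_constraintCell hΩ fun k x hx =>
    (contDiffAt_lagConstraint hΩ hG i k ψ hx).continuousAt

theorem fderiv_lagConstraint_comp_inr (hΩ : IsOpen Ω)
    (hGx : ∀ x ∈ Ω, ∀ i v, HasGradientAt (fun x' => G x' i v) (Gx x i v) x)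
    (hG : ∀ i, ContDiffOn ℝ 1 (fun q : _ × ℝ => G q.1 i q.2) (Ω ×ˢ univ)) (i : Fin N)
    (k : {k // k ≠ i}) (ψ : Fin N → ℝ) (hx : x ∈ Ω) :
    fderiv ℝ (lagConstraint G i k) (ψ, x) ∘L .inr ℝ _ _ =
      InnerProductSpace.toDual ℝ _ (Gx x i (ψ i)) - InnerProductSpace.toDual ℝ _ (Gx x k (ψ k)) :=
  HasFDerivAt.unique
    (((contDiffAt_lagConstraint hΩ hG i k ψ hx).differentiableAt one_ne_zero).hasFDerivAt.comp x
      (hasFDerivAt_prodMk_right ψ x))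
    ((hGx x hx i (ψ i)).hasFDerivAt.sub (hGx x hx k (ψ k)).hasFDerivAt)

theorem Hfun_eq_integral_indicator (hΩ : IsOpen Ω)
    (hG : ∀ i, ContDiffOn ℝ 1 (fun q : _ × ℝ => G q.1 i q.2) (Ω ×ˢ univ))
    (hρ : Continuous ρ) (hρ0 : ∀ x, 0 ≤ ρ x) (ψ : Fin N → ℝ) (i : Fin N) :
    Hfun Ω G ρ ψ i = ∫ x, (Lag Ω G ψ i).indicator ρ x := by
  have hmeas := measurableSet_Lag hΩ hG ψ i
  rw [integral_indicator hmeas, integral_eq_lintegral_of_nonneg_ae (.of_forall hρ0)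
    hρ.aestronglyMeasurable, Hfun, withDensity_apply _ hmeas]

theorem differentiableAt_Hfun (hd : 1 ≤ d) (hΩ : IsOpen Ω)
    (hGx : ∀ x ∈ Ω, ∀ i v, HasGradientAt (fun x' => G x' i v) (Gx x i v) x)
    (hG : ∀ i, ContDiffOn ℝ 1 (fun q : _ × ℝ => G q.1 i q.2) (Ω ×ˢ univ))
    (hTwist : ∀ x ∈ Ω, Function.Injective fun q : Fin N × ℝ => (G x q.1 q.2, Gx x q.1 q.2))
    (hρ : Continuous ρ) (hρ0 : ∀ x, 0 ≤ ρ x) (hρc : HasCompactSupport ρ) (hρΩ : tsupport ρ ⊆ Ω)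
    (hgen : ∀ i j k, i ≠ j → i ≠ k → j ≠ k →
      μH[(d : ℝ) - 1] (Gam Ω G ψ i j ∩ Gam Ω G ψ i k) = 0) :
    DifferentiableAt ℝ (Hfun Ω G ρ) ψ := by
  have : Nonempty (Fin d) := ⟨⟨0, hd⟩⟩
  refine differentiableAt_pi.2 fun i => ?_
  simp_rw [Hfun_eq_integral_indicator hΩ hG hρ hρ0]
  refine differentiableAt_integral_indicator_of_near (fun ψ' => measurableSet_Lag hΩ hG ψ' i)
    hρ hρc fun x hx => ?_
  simp_rw [Lag_eq_constraintCell]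
  refine differentiableMassNear_constraintCell volume hΩ
    (fun k ψ' x hx => contDiffAt_lagConstraint hΩ hG i k ψ' hx) (fun k x hx hzero => ?_)
    (fun k l hkl => ?_) (hρΩ hx)
  · rw [fderiv_lagConstraint_comp_inr hΩ hGx hG i k ψ hx]
    exact toDual_sub_toDual_ne_zero_of_mem_Gam hTwist k.2.symm ⟨hx, sub_eq_zero.1 hzero⟩
  · rw [finrank_euclideanSpace_fin]
    refine measure_mono_null ?_ (hgen i k l k.2.symm l.2.symm (Subtype.coe_ne_coe.2 hkl))
    exact fun x hx => ⟨⟨hx.1, sub_eq_zero.1 hx.2.1⟩, ⟨hx.1, sub_eq_zero.1 hx.2.2⟩⟩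

/-! ### Growth of the mass of a family of cells -/

variable {S : Finset (Fin N)} (hS : S.Nonempty) (hSc : Sᶜ.Nonempty)

theorem biUnion_Lag_eq (ψ : Fin N → ℝ) :
    ⋃ i ∈ S, Lag Ω G ψ i = {x ∈ Ω | gap hS hSc (fun i => G x i (ψ i)) ≤ 0} := by
  ext x
  simp only [Lag, gap_nonpos_iff, mem_iUnion, mem_ofPred_eq, exists_prop]
  tauto

theorem volume_gap_eq_zero (hΩ : IsOpen Ω)
    (hGx : ∀ x ∈ Ω, ∀ i v, HasGradientAt (fun x' => G x' i v) (Gx x i v) x)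
    (hG : ∀ i, ContDiffOn ℝ 1 (fun q : _ × ℝ => G q.1 i q.2) (Ω ×ˢ univ))
    (hTwist : ∀ x ∈ Ω, Function.Injective fun q : Fin N × ℝ => (G x q.1 q.2, Gx x q.1 q.2))
    (ψ : Fin N → ℝ) : volume {x ∈ Ω | gap hS hSc (fun i => G x i (ψ i)) = 0} = 0 := by
  have hcover : {x ∈ Ω | gap hS hSc (fun i => G x i (ψ i)) = 0} ⊆
      ⋃ i ∈ S, ⋃ j ∈ Sᶜ, Gam Ω G ψ i j := by
    rintro x ⟨hx, hgap⟩
    obtain ⟨i, hi, j, hj, heq⟩ := exists_eq_of_gap_eq_zero hS hSc hgap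
    exact mem_biUnion hi (mem_biUnion hj ⟨hx, heq⟩)
  refine measure_mono_null hcover ((measure_biUnion_null_iff S.countable_toSet).2 fun i hi =>
    (measure_biUnion_null_iff Sᶜ.countable_toSet).2 fun j hj => ?_)
  refine volume_Gam_eq_zero hΩ hGx hG hTwist fun hij => ?_
  exact Finset.mem_compl.1 hj (hij ▸ hi)

theorem sum_measureReal_Lag (hΩ : IsOpen Ω)
    (hGx : ∀ x ∈ Ω, ∀ i v, HasGradientAt (fun x' => G x' i v) (Gx x i v) x)
    (hG : ∀ i, ContDiffOn ℝ 1 (fun q : _ × ℝ => G q.1 i q.2) (Ω ×ˢ univ))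
    (hTwist : ∀ x ∈ Ω, Function.Injective fun q : Fin N × ℝ => (G x q.1 q.2, Gx x q.1 q.2))
    {μ : Measure (EuclideanSpace ℝ (Fin d))} [IsFiniteMeasure μ] (hμ : μ ≪ volume)
    (ψ : Fin N → ℝ) :
    ∑ i ∈ S, μ.real (Lag Ω G ψ i) =
      μ.real {x ∈ Ω | gap hS hSc (fun i => G x i (ψ i)) ≤ 0} := by
  rw [← biUnion_Lag_eq, measureReal_biUnion_finset₀]
  · intro i _ j _ hij
    refine measure_mono_null ?_ (hμ (volume_Gam_eq_zero (ψ := ψ) hΩ hGx hG hTwist hij))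
    exact fun x hx => ⟨hx.1.1, le_antisymm (hx.2.2 i) (hx.1.2 j)⟩
  · exact fun i _ => (measurableSet_Lag hΩ hG ψ i).nullMeasurableSet

theorem sum_measureReal_Lag_add_le (hΩ : IsOpen Ω)
    (hGx : ∀ x ∈ Ω, ∀ i v, HasGradientAt (fun x' => G x' i v) (Gx x i v) x)
    (hG : ∀ i, ContDiffOn ℝ 1 (fun q : _ × ℝ => G q.1 i q.2) (Ω ×ˢ univ))
    (hTwist : ∀ x ∈ Ω, Function.Injective fun q : Fin N × ℝ => (G x q.1 q.2, Gx x q.1 q.2))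
    {μ : Measure (EuclideanSpace ℝ (Fin d))} [IsFiniteMeasure μ] (hμ : μ ≪ volume)
    (hanti : ∀ x ∈ Ω, ∀ i, Antitone (G x i)) {ψ ψ' : Fin N → ℝ} (hψS : ∀ i ∈ S, ψ' i = ψ i)
    (hψSc : ∀ j ∈ Sᶜ, ψ j ≤ ψ' j) {T : Set (EuclideanSpace ℝ (Fin d))} (hTΩ : T ⊆ Ω)
    (hTpos : ∀ x ∈ T, 0 < gap hS hSc fun i => G x i (ψ i))
    (hTnonpos : ∀ x ∈ T, gap hS hSc (fun i => G x i (ψ' i)) ≤ 0) :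
    ∑ i ∈ S, μ.real (Lag Ω G ψ i) + μ.real T ≤ ∑ i ∈ S, μ.real (Lag Ω G ψ' i) := by
  set L := {x ∈ Ω | gap hS hSc (fun i => G x i (ψ i)) ≤ 0} with hL
  have hLmeas : MeasurableSet L := by
    rw [hL, ← biUnion_Lag_eq]
    exact S.measurableSet_biUnion fun i _ => measurableSet_Lag hΩ hG ψ i
  have hdisj : Disjoint T L := disjoint_left.2 fun x hxT hxL => (hTpos x hxT).not_ge hxL.2
  have hmono : ∀ x ∈ Ω, gap hS hSc (fun i => G x i (ψ' i)) ≤ gap hS hSc fun i => G x i (ψ i) := by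
    intro x hx
    simpa using gap_le_gap_sub hS hSc (η := 0) (fun i hi => by rw [hψS i hi])
      fun j hj => (hanti x hx j (hψSc j hj)).trans_eq (sub_zero _).symm
  simp_rw [sum_measureReal_Lag hS hSc hΩ hGx hG hTwist hμ]
  rw [add_comm, ← measureReal_union hdisj hLmeas]
  refine measureReal_mono (union_subset (fun x hx => ⟨hTΩ hx, hTnonpos x hx⟩) ?_)
  exact fun x hx => ⟨hx.1, (hmono x hx.1).trans hx.2⟩

theorem locallyLipschitzOn_gap (hΩ : IsOpen Ω)
    (hG : ∀ i, ContDiffOn ℝ 1 (fun q : _ × ℝ => G q.1 i q.2) (Ω ×ˢ univ)) (ψ : Fin N → ℝ) :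
    LocallyLipschitzOn Ω fun x => gap hS hSc fun i => G x i (ψ i) := by
  intro x hx
  have hdiff : ContDiffAt ℝ 1 (fun x i => G x i (ψ i)) x := contDiffAt_pi.2 fun i =>
    (contDiffAt_generatingFunction hΩ hG hx i (ψ i)).comp (f := fun x => (x, ψ i)) x (by fun_prop)
  obtain ⟨K, t, ht, hKt⟩ := hdiff.exists_lipschitzOnWith
  exact ⟨_, t, mem_nhdsWithin_of_mem_nhds ht, (lipschitzWith_gap hS hSc).comp_lipschitzOnWith hKt⟩

theorem exists_pos_forall_nhds_volume_gap_ge (hΩ : IsOpen Ω)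
    (hGx : ∀ x ∈ Ω, ∀ i v, HasGradientAt (fun x' => G x' i v) (Gx x i v) x)
    (hG : ∀ i, ContDiffOn ℝ 1 (fun q : _ × ℝ => G q.1 i q.2) (Ω ×ˢ univ))
    (hTwist : ∀ x ∈ Ω, Function.Injective fun q : Fin N × ℝ => (G x q.1 q.2, Gx x q.1 q.2))
    (hρ : Continuous ρ) (hρΩ : tsupport ρ ⊆ Ω) (hconn : IsPreconnected {x | 0 < ρ x})
    (hψ : ∀ i, 0 < Hfun Ω G ρ ψ i) :
    ∃ x₀, 0 < ρ x₀ ∧ ∀ V ∈ 𝓝 x₀, ∃ c > 0, ∀ᶠ η in 𝓝[>] 0, ENNReal.ofReal (c * η) ≤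
      volume (V ∩ (fun x => gap hS hSc fun i => G x i (ψ i)) ⁻¹' Ioc 0 η) := by
  have hpos : {x | 0 < ρ x} ⊆ Ω := fun x hx => hρΩ (subset_tsupport ρ hx.ne')
  have hnull := volume_gap_eq_zero hS hSc hΩ hGx hG hTwist ψ
  have hpoint (i : Fin N) : ∃ x ∈ Lag Ω G ψ i, 0 < ρ x ∧ gap hS hSc (fun i => G x i (ψ i)) ≠ 0 := by
    obtain ⟨x, hx, hρx, hxnull⟩ := exists_mem_pos_notMem_of_withDensity_ne_zero
      (s := Lag Ω G ψ i) hρ.measurable (fun hzero => (hψ i).ne' (by simp [Hfun, hzero])) hnull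
    exact ⟨x, hx, hρx, fun hgap => hxnull ⟨hx.1, hgap⟩⟩
  refine exists_mem_forall_nhds_exists_ofReal_mul_le_measure volume
    (isOpen_lt continuous_const hρ) hconn ((locallyLipschitzOn_gap hS hSc hΩ hG ψ).mono hpos)
    (measure_mono_null (inter_subset_inter_left _ hpos) hnull) ?_ ?_
  · obtain ⟨i, hi⟩ := hS
    obtain ⟨x, hx, hρx, hgap⟩ := hpoint i
    exact ⟨x, hρx, lt_of_le_of_ne ((gap_nonpos_iff _ _).2 ⟨i, hi, hx.2⟩) hgap⟩
  · obtain ⟨j, hj⟩ := hSc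
    obtain ⟨x, hx, hρx, hgap⟩ := hpoint j
    exact ⟨x, hρx, lt_of_le_of_ne (gap_nonneg_of_forall_le _ _ hj hx.2) hgap.symm⟩

theorem exists_eventually_forall_add_le_sub_mul (hΩ : IsOpen Ω)
    (hGv : ∀ x ∈ Ω, ∀ i v, HasDerivAt (fun v' => G x i v') (Gv x i v) v)
    (hG : ∀ i, ContDiffOn ℝ 1 (fun q : _ × ℝ => G q.1 i q.2) (Ω ×ˢ univ))
    (hMono : ∀ x ∈ Ω, ∀ i v, Gv x i v < 0) (ψ : Fin N → ℝ) (hx : x ∈ Ω) :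
    ∃ c > 0, ∀ᶠ q in 𝓝 x ×ˢ 𝓝[>] (0 : ℝ),
      ∀ i, G q.1 i (ψ i + q.2) ≤ G q.1 i (ψ i) - c * q.2 := by
  have hdecay (i : Fin N) : ∀ᶠ c in 𝓝[>] 0, ∀ᶠ q in 𝓝 x ×ˢ 𝓝[>] (0 : ℝ),
      G q.1 i (ψ i + q.2) ≤ G q.1 i (ψ i) - c * q.2 := by
    have hstrict := (contDiffAt_generatingFunction hΩ hG hx i (ψ i)).hasStrictFDerivAt one_ne_zero
    refine eventually_eventually_add_le_sub_mul hstrict ?_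
    have hcomp := hstrict.hasFDerivAt.comp_hasDerivAt (ψ i)
      ((hasDerivAt_const (ψ i) x).prodMk (hasDerivAt_id (ψ i)))
    exact hcomp.unique (hGv x hx i (ψ i)) ▸ hMono x hx i (ψ i)
  obtain ⟨c, hc, hc0⟩ := ((eventually_all.2 hdecay).and self_mem_nhdsWithin).exists
  exact ⟨c, hc0, eventually_all.2 hc⟩

theorem exists_eventually_exists_mul_le_measureReal (hΩ : IsOpen Ω)
    (hGx : ∀ x ∈ Ω, ∀ i v, HasGradientAt (fun x' => G x' i v) (Gx x i v) x)
    (hGv : ∀ x ∈ Ω, ∀ i v, HasDerivAt (fun v' => G x i v') (Gv x i v) v)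
    (hG : ∀ i, ContDiffOn ℝ 1 (fun q : _ × ℝ => G q.1 i q.2) (Ω ×ˢ univ))
    (hMono : ∀ x ∈ Ω, ∀ i v, Gv x i v < 0)
    (hTwist : ∀ x ∈ Ω, Function.Injective fun q : Fin N × ℝ => (G x q.1 q.2, Gx x q.1 q.2))
    (hρ : Continuous ρ) [IsFiniteMeasure (volume.withDensity fun x => ENNReal.ofReal (ρ x))]
    (hρΩ : tsupport ρ ⊆ Ω) (hconn : IsPreconnected {x | 0 < ρ x})
    (hψ : ∀ i, 0 < Hfun Ω G ρ ψ i) :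
    ∃ κ > 0, ∀ᶠ ε in 𝓝[>] (0 : ℝ), ∃ T ⊆ Ω,
      κ * ε ≤ (volume.withDensity fun x => ENNReal.ofReal (ρ x)).real T ∧
      ∀ x ∈ T, 0 < gap hS hSc (fun i => G x i (ψ i)) ∧
        ∀ j, G x j (ψ j + ε) ≤ G x j (ψ j) - gap hS hSc fun i => G x i (ψ i) := by
  obtain ⟨x₀, hρx₀, hstrip⟩ :=
    exists_pos_forall_nhds_volume_gap_ge hS hSc hΩ hGx hG hTwist hρ hρΩ hconn hψ
  have hx₀ : x₀ ∈ Ω := hρΩ (subset_tsupport ρ hρx₀.ne')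
  obtain ⟨c, hc, hdecay⟩ := exists_eventually_forall_add_le_sub_mul hΩ hGv hG hMono ψ hx₀
  obtain ⟨V, hV, J, hJ, hVJ⟩ := mem_prod_iff.1 hdecay
  obtain ⟨b, hb, hvol⟩ := hstrip (V ∩ Ω ∩ {x | ρ x₀ / 2 < ρ x}) (inter_mem
    (inter_mem hV (hΩ.mem_nhds hx₀)) (hρ.continuousAt.eventually_const_lt (half_lt_self hρx₀)))
  have hscale : Tendsto (fun ε => c * ε) (𝓝[>] 0) (𝓝[>] 0) :=
    tendsto_nhdsWithin_of_tendsto_nhds_of_eventually_within _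
      (tendsto_nhdsWithin_of_tendsto_nhds (Continuous.tendsto' (by fun_prop) 0 0 (mul_zero c)))
      (eventually_mem_nhdsWithin.mono fun ε hε => mul_pos hc hε)
  refine ⟨ρ x₀ / 2 * (b * c), by positivity, ?_⟩
  filter_upwards [hJ, hscale.eventually hvol] with ε hεJ hεvol
  refine ⟨V ∩ Ω ∩ {x | ρ x₀ / 2 < ρ x} ∩ (fun x => gap hS hSc fun i => G x i (ψ i)) ⁻¹'
    Ioc 0 (c * ε), fun x hx => hx.1.1.2, ?_, fun x hx => ⟨hx.2.1, fun j => ?_⟩⟩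
  · rw [mul_assoc, mul_assoc]
    exact mul_le_measureReal_withDensity hρ.measurable (half_pos hρx₀).le
      (fun x hx => hx.1.2.le) hεvol
  · have hxε : (x, ε) ∈ V ×ˢ J := ⟨hx.1.1.1, hεJ⟩
    exact (hVJ hxε j).trans (sub_le_sub_left hx.2.2 _)

-- Raising `ψ` by `ε` outside `S` lowers the gap at rate bounded below, so the points where the gap
-- was positive but of order `ε` join the cells of `S`; their mass is itself at least of order `ε`.
theorem exists_eventually_sum_Hfun_add_mul_le (hΩ : IsOpen Ω)
    (hGx : ∀ x ∈ Ω, ∀ i v, HasGradientAt (fun x' => G x' i v) (Gx x i v) x)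
    (hGv : ∀ x ∈ Ω, ∀ i v, HasDerivAt (fun v' => G x i v') (Gv x i v) v)
    (hG : ∀ i, ContDiffOn ℝ 1 (fun q : _ × ℝ => G q.1 i q.2) (Ω ×ˢ univ))
    (hMono : ∀ x ∈ Ω, ∀ i v, Gv x i v < 0)
    (hTwist : ∀ x ∈ Ω, Function.Injective fun q : Fin N × ℝ => (G x q.1 q.2, Gx x q.1 q.2))
    (hρ : Continuous ρ) (hρc : HasCompactSupport ρ) (hρΩ : tsupport ρ ⊆ Ω)
    (hconn : IsPreconnected {x | 0 < ρ x}) (hψ : ∀ i, 0 < Hfun Ω G ρ ψ i)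
    (hS : S.Nonempty) (hSc : Sᶜ.Nonempty) :
    ∃ κ > 0, ∀ᶠ ε in 𝓝[>] (0 : ℝ), ∑ i ∈ S, Hfun Ω G ρ ψ i + κ * ε ≤
      ∑ i ∈ S, Hfun Ω G ρ (ψ + ε • ∑ j ∈ Sᶜ, Pi.single j 1) i := by
  have : IsFiniteMeasure (volume.withDensity fun x => ENNReal.ofReal (ρ x)) :=
    isFiniteMeasure_withDensity_ofReal (hρ.integrable_of_hasCompactSupport hρc).2
  have hanti (x) (hx : x ∈ Ω) (i) : Antitone (G x i) :=
    antitone_of_hasDerivAt_nonpos (hGv x hx i) fun v => (hMono x hx i v).le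
  obtain ⟨κ, hκ, hmass⟩ :=
    exists_eventually_exists_mul_le_measureReal hS hSc hΩ hGx hGv hG hMono hTwist hρ hρΩ hconn hψ
  refine ⟨κ, hκ, ?_⟩
  filter_upwards [hmass, self_mem_nhdsWithin] with ε ⟨T, hTΩ, hTmass, hT⟩ hε
  set ψ' : Fin N → ℝ := ψ + ε • ∑ j ∈ Sᶜ, Pi.single j 1 with hψ'
  have hψS (i) (hi : i ∈ S) : ψ' i = ψ i := by
    simp [hψ', Finset.sum_apply, Pi.single_apply, hi]
  have hψSc (j) (hj : j ∈ Sᶜ) : ψ' j = ψ j + ε := by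
    simp [hψ', Finset.sum_apply, Pi.single_apply, Finset.mem_compl.1 hj]
  refine (add_le_add_right hTmass _).trans (sum_measureReal_Lag_add_le hS hSc hΩ hGx hG hTwist
    (withDensity_absolutelyContinuous volume fun x => ENNReal.ofReal (ρ x)) hanti hψS
    (fun j hj => hψSc j hj ▸ le_add_of_nonneg_right hε.le) hTΩ (fun x hx => (hT x hx).1)
    fun x hx => ?_)
  refine (gap_le_gap_sub hS hSc (fun i hi => by rw [hψS i hi]) fun j hj => ?_).trans_eq (sub_self _)
  rw [hψSc j hj]
  exact (hT x hx).2 j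

end Laguerre

theorem interior_inter_pos_eq {E : Type*} [TopologicalSpace E] {ρ : E → ℝ} {X : Set E}
    (hρ : Continuous ρ) (hρX : tsupport ρ ⊆ X) : interior X ∩ {x | 0 < ρ x} = {x | 0 < ρ x} :=
  inter_eq_right.2 (interior_maximal (fun _ hx => hρX (subset_tsupport ρ (ne_of_gt hx)))
    (isOpen_lt continuous_const hρ))

theorem graph_connected_general (hd : 1 ≤ d) (hN : 1 ≤ N)
    {Ω : Set (EuclideanSpace ℝ (Fin d))} (hΩ : IsOpen Ω)
    (G : EuclideanSpace ℝ (Fin d) → Fin N → ℝ → ℝ)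
    (Gx : EuclideanSpace ℝ (Fin d) → Fin N → ℝ → EuclideanSpace ℝ (Fin d))
    (Gv : EuclideanSpace ℝ (Fin d) → Fin N → ℝ → ℝ)
    (hGx : ∀ x ∈ Ω, ∀ i v, HasGradientAt (fun x' => G x' i v) (Gx x i v) x)
    (hGv : ∀ x ∈ Ω, ∀ i v, HasDerivAt (fun v' => G x i v') (Gv x i v) v)
    (hG : ∀ i, ContDiffOn ℝ 1 (fun q : _ × ℝ => G q.1 i q.2) (Ω ×ˢ univ))
    (hMono : ∀ x ∈ Ω, ∀ i v, Gv x i v < 0)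
    (hTwist : ∀ x ∈ Ω, Function.Injective fun q : Fin N × ℝ => (G x q.1 q.2, Gx x q.1 q.2))
    (ρ : EuclideanSpace ℝ (Fin d) → ℝ) (hρ : Continuous ρ) (hρ0 : ∀ x, 0 ≤ ρ x)
    (hρc : HasCompactSupport ρ) (hρΩ : tsupport ρ ⊆ Ω) (hconn : IsPreconnected {x | 0 < ρ x})
    (ψ : Fin N → ℝ) (hgen : ∀ i j k, i ≠ j → i ≠ k → j ≠ k →
      μH[(d : ℝ) - 1] (Gam Ω G ψ i j ∩ Gam Ω G ψ i k) = 0)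
    (hψ : ∀ i, 0 < Hfun Ω G ρ ψ i) :
    (SimpleGraph.fromRel fun i j : Fin N =>
      0 < fderiv ℝ (Hfun Ω G ρ) ψ (Pi.single j 1) i).Connected := by
  have : Nonempty (Fin N) := ⟨⟨0, hN⟩⟩
  refine connected_fromRel_of_forall_exists_rel fun S hS hSc => ?_
  obtain ⟨κ, hκ, hgrowth⟩ := exists_eventually_sum_Hfun_add_mul_le hΩ hGx hGv hG hMono hTwist
    hρ hρc hρΩ hconn hψ hS hSc
  exact exists_fderiv_single_pos_of_eventually_add_mul_le
    (differentiableAt_Hfun hd hΩ hGx hG hTwist hρ hρ0 hρc hρΩ hgen) hκ hgrowth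

/-- Lemma 3.6: for `ψ` with all cells of positive mass, the graph whose edges link `i`
and `j` when `∂Hᵢ/∂ψⱼ(ψ) > 0` is connected. -/
theorem graph_connected
    (hd : 1 ≤ d) (hN : 1 ≤ N)
    {Ω : Set (EuclideanSpace ℝ (Fin d))} (hΩo : IsOpen Ω) (hΩb : Bornology.IsBounded Ω)
    (y : Fin N → EuclideanSpace ℝ (Fin d)) (hy : Function.Injective y)
    (G : EuclideanSpace ℝ (Fin d) → Fin N → ℝ → ℝ)
    (Gx : EuclideanSpace ℝ (Fin d) → Fin N → ℝ → EuclideanSpace ℝ (Fin d))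
    (Gv : EuclideanSpace ℝ (Fin d) → Fin N → ℝ → ℝ)
    (hGx : ∀ x ∈ Ω, ∀ (i : Fin N) (v : ℝ), HasGradientAt (fun x' => G x' i v) (Gx x i v) x)
    (hGv : ∀ x ∈ Ω, ∀ (i : Fin N) (v : ℝ), HasDerivAt (fun v' => G x i v') (Gv x i v) v)
    (hGxc : ∀ i : Fin N, ContinuousOn (fun q : EuclideanSpace ℝ (Fin d) × ℝ => Gx q.1 i q.2) (Ω ×ˢ Set.univ))
    (hGvc : ∀ i : Fin N, ContinuousOn (fun q : EuclideanSpace ℝ (Fin d) × ℝ => Gv q.1 i q.2) (Ω ×ˢ Set.univ))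
    (hG2 : ∀ i : Fin N, ContDiffOn ℝ 2 (fun q : EuclideanSpace ℝ (Fin d) × ℝ => G q.1 i q.2) (Ω ×ˢ Set.univ))
    (hReg : ∀ α β : ℝ, α < β → ∃ C : ℝ, ∀ x ∈ Ω, ∀ i : Fin N, ∀ v ∈ Set.Icc α β, ‖Gx x i v‖ ≤ C)
    (hMono : ∀ x ∈ Ω, ∀ (i : Fin N) (v : ℝ), Gv x i v < 0)
    (hTwist : ∀ x ∈ Ω, Function.Injective fun q : Fin N × ℝ => (G x q.1 q.2, Gx x q.1 q.2))
    {X : Set (EuclideanSpace ℝ (Fin d))} (hXc : IsCompact X) (hXΩ : X ⊆ Ω)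
    (ρ : EuclideanSpace ℝ (Fin d) → ℝ) (hρc : Continuous ρ) (hρ0 : ∀ x, 0 ≤ ρ x)
    (hρsupp : tsupport ρ ⊆ X) (hρ1 : (∫ x, ρ x) = 1)
    (hGenΩ : ∀ (ψ : Fin N → ℝ) (i j k : Fin N), i ≠ j → i ≠ k → j ≠ k →
      μH[(d : ℝ) - 1] (Gam Ω G ψ i j ∩ Gam Ω G ψ i k) = 0)
    (hGenX : ∀ (ψ : Fin N → ℝ) (i j : Fin N), i ≠ j →
      μH[(d : ℝ) - 1] (Gam Ω G ψ i j ∩ frontier X) = 0)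
    (hpc : IsPathConnected (interior X ∩ {x | 0 < ρ x}))
    (ψ : Fin N → ℝ) (hψ : ∀ i : Fin N, 0 < Hfun Ω G ρ ψ i) :
    (SimpleGraph.fromRel fun i j : Fin N =>
      0 < fderiv ℝ (Hfun Ω G ρ) ψ (Pi.single j 1) i).Connected := by
  rw [interior_inter_pos_eq hρc hρsupp] at hpc
  exact graph_connected_general hd hN hΩo G Gx Gv hGx hGv (fun i => (hG2 i).of_le one_le_two) hMono
    hTwist ρ hρc hρ0 (hXc.of_isClosed_subset (isClosed_tsupport ρ) hρsupp) (hρsupp.trans hXΩ)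
    hpc.isConnected.isPreconnected ψ (hGenΩ ψ) hψ
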